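/- arXiv:math/0602587 — 2 statements merged into one kernel-verified Lean document; each statement's English description precedes it below -/
import Mathlib

section
/- Let (Ω, ℋ) be a measurable space and F : Ω → 𝒫(ℝ^d) a set-valued map with measurable graph (gr F ∈ ℋ ⊗ ℬ(ℝ^d), where the probability space is complete). Then any ℋ-measurable selector f of the map ω ↦ conv(F(ω)) admits an ℋ-measurable Carathéodory representation: there exist ℋ-measurable selectors g_1, …, g_{d+1} of F and ℋ-measurable functions α_1, …, α_{d+1} ≥ 0 with Σ α_k = 1 such that f = Σ_{k=1}^{d+1} α_k g_k almost surely. -/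
open MeasureTheory

/-!
The pairs (weights, points) representing `f ω` as a convex combination of points of `F ω` form a
set-valued map with measurable graph, whose values are nonempty by Carathéodory's theorem; a
measurable selector of this map is a measurable representation.

Selectors exist by the Jankov–von Neumann argument. A measurable subset of a product `Ω × X`
involves only countably many measurable subsets of `Ω`, so `Ω` may be replaced by the Cantor
space and the graph by a continuous image of the Baire space. By Choquet's capacitability
argument, the images of countably many compact subsets of the Baire space exhaust the projection
up to a null set. On a compact set parametrized by the Cantor set, the least parameter in each
fiber is a measurable choice. Completeness of the measure absorbs the exceptional null set.
-/

section Sections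

open Set

theorem exists_measurable_section_of_isCompact_linearOrder {L C : Type*}
    [LinearOrder L] [TopologicalSpace L] [OrderTopology L] [SecondCountableTopology L]
    [MeasurableSpace L] [BorelSpace L]
    [TopologicalSpace C] [T2Space C] [MeasurableSpace C] [OpensMeasurableSpace C]
    {K : Set L} (hK : IsCompact K) [Nonempty K] {p : K → C} (hp : Continuous p) :
    ∃ s : C → K, Measurable s ∧ ∀ c ∈ range p, p (s c) = c := by
  have : CompactSpace K := isCompact_iff_compactSpace.1 hK
  let t₀ : K := Classical.arbitrary K
  have exists_least (c : C) :
      ∃ t : K, (c ∈ range p → IsLeast (p ⁻¹' {c}) t) ∧ (c ∉ range p → t = t₀) := by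
    by_cases hc : c ∈ range p
    · obtain ⟨t, ht⟩ := (isClosed_singleton.preimage hp).isCompact.exists_isLeast hc
      exact ⟨t, fun _ => ht, absurd hc⟩
    · exact ⟨t₀, fun h => absurd h hc, fun _ => rfl⟩
  choose s hs_least hs_default using exists_least
  have preimage_Iic (a : L) : (fun c => (s c : L)) ⁻¹' Iic a =
      p '' {t | (t : L) ≤ a} ∪ ((range p)ᶜ ∩ {_c | (t₀ : L) ≤ a}) := by
    ext c
    by_cases hc : c ∈ range p
    · refine ⟨fun h => .inl ⟨s c, h, (hs_least c hc).1⟩, ?_⟩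
      rintro (⟨t, hta, htc⟩ | ⟨hc', -⟩)
      · exact le_trans ((hs_least c hc).2 htc) hta
      · exact absurd hc hc'
    · refine ⟨fun h => .inr ⟨hc, (congrArg _ (hs_default c hc)).symm.trans_le h⟩, ?_⟩
      rintro (h | ⟨-, h⟩)
      · exact absurd (image_subset_range _ _ h) hc
      · exact (congrArg _ (hs_default c hc)).trans_le h
  have measurableSet_image {A : Set K} (hA : IsClosed A) : MeasurableSet (p '' A) :=
    (hA.isCompact.image hp).isClosed.measurableSet
  have hs : Measurable fun c => (s c : L) := measurable_of_Iic fun a => by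
    rw [preimage_Iic, ← image_univ]
    exact (measurableSet_image (isClosed_Iic.preimage continuous_subtype_val)).union
      ((measurableSet_image isClosed_univ).compl.inter (.const _))
  exact ⟨s, hs.subtype_mk, fun c hc => (hs_least c hc).1⟩

theorem exists_measurable_section_of_isCompact {Y C : Type*}
    [TopologicalSpace Y] [TopologicalSpace.MetrizableSpace Y]
    [MeasurableSpace Y] [BorelSpace Y] [Nonempty Y]
    [TopologicalSpace C] [T2Space C] [MeasurableSpace C] [OpensMeasurableSpace C]
    {p : Y → C} (hp : Continuous p) {K : Set Y} (hK : IsCompact K) :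
    ∃ s : C → Y, Measurable s ∧ ∀ c ∈ p '' K, p (s c) = c := by
  rcases K.eq_empty_or_nonempty with rfl | hne
  · exact ⟨fun _ => Classical.arbitrary Y, measurable_const, by simp⟩
  let := TopologicalSpace.metrizableSpaceMetric Y
  have : Nonempty K := hne.to_subtype
  have : CompactSpace K := isCompact_iff_compactSpace.1 hK
  obtain ⟨q, hq, hq_surj⟩ := exists_nat_bool_continuous_surjective_of_compact K
  let e := cantorSetHomeomorphNatToBool
  have : Nonempty cantorSet := e.toEquiv.nonempty
  have hqe : Continuous fun t => (q (e t) : Y) :=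
    continuous_subtype_val.comp (hq.comp e.continuous)
  obtain ⟨s, hs, hps⟩ :=
    exists_measurable_section_of_isCompact_linearOrder isCompact_cantorSet (hp.comp hqe)
  refine ⟨fun c => q (e (s c)), hqe.measurable.comp hs, ?_⟩
  rintro _ ⟨y, hy, rfl⟩
  obtain ⟨t, ht⟩ := (hq_surj.comp e.surjective) ⟨y, hy⟩
  exact hps _ ⟨t, congrArg (fun z : K => p z) ht⟩

theorem exists_measurable_eq_on_iUnion {α β : Type*} [MeasurableSpace α] [MeasurableSpace β]
    {D : ℕ → Set α} (hD : ∀ n, MeasurableSet (D n)) {s : ℕ → α → β} (hs : ∀ n, Measurable (s n)) :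
    ∃ g : α → β, Measurable g ∧ ∀ x ∈ ⋃ n, D n, ∃ n, x ∈ D n ∧ g x = s n x := by
  obtain ⟨g, hg, hgs⟩ := exists_measurable_piecewise (disjointed D)
    (fun n => MeasurableSet.disjointed hD n) s hs fun i j hij x hx =>
      absurd hx.2 (disjoint_left.1 (disjoint_disjointed D hij) hx.1)
  refine ⟨g, hg, fun x hx => ?_⟩
  obtain ⟨n, hn⟩ := mem_iUnion.1 (iUnion_disjointed (f := D) ▸ hx)
  exact ⟨n, disjointed_subset D n hn, hgs n hn⟩

end Sections

section Capacitability

open Set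

theorem exists_lt_measure_image_inter_apply_le {C : Type*} [MeasurableSpace C] {ν : Measure C}
    {p : (ℕ → ℕ) → C} {c : ENNReal} (n : ℕ) {B : Set (ℕ → ℕ)} (hB : c < ν (p '' B)) :
    ∃ j, c < ν (p '' (B ∩ {x | x n ≤ j})) := by
  have hmono : Monotone fun j : ℕ => p '' (B ∩ {x | x n ≤ j}) := fun i j hij =>
    image_mono (inter_subset_inter_right _ fun _ hx => le_trans hx hij)
  have hUnion : p '' B = ⋃ j : ℕ, p '' (B ∩ {x | x n ≤ j}) := by
    rw [← image_iUnion, ← inter_iUnion,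
      inter_eq_left.2 fun x _ => mem_iUnion.2 ⟨x n, le_refl (x n)⟩]
  rwa [hUnion, hmono.measure_iUnion, lt_iSup_iff] at hB

theorem exists_forall_lt_measure_image_initial_le {C : Type*} [MeasurableSpace C]
    {ν : Measure C} {p : (ℕ → ℕ) → C} {c : ENNReal} (hc : c < ν (range p)) :
    ∃ m : ℕ → ℕ, ∀ n, c < ν (p '' {x | ∀ i < n, x i ≤ m i}) := by
  choose! J hJ using fun (n : ℕ) (B : Set (ℕ → ℕ)) (hB : c < ν (p '' B)) =>
    exists_lt_measure_image_inter_apply_le n hB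
  let B : ℕ → Set (ℕ → ℕ) := Nat.rec univ fun n B => B ∩ {x | x n ≤ J n B}
  have hB (n : ℕ) : B n = {x | ∀ i < n, x i ≤ J i (B i)} := by
    induction n with
    | zero => simp [B]
    | succ n ih =>
      ext x
      exact (and_congr_left' (Set.ext_iff.1 ih x)).trans Nat.forall_lt_succ_right.symm
  refine ⟨fun i => J i (B i), fun n => ?_⟩
  rw [← hB]
  induction n with
  | zero => rwa [← image_univ] at hc
  | succ n ih => exact hJ n _ ih

theorem exists_initial_le_subset_of_Iic_subset {m : ℕ → ℕ} {V : Set (ℕ → ℕ)} (hV : IsOpen V)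
    (hmV : Iic m ⊆ V) : ∃ n, {x | ∀ i < n, x i ≤ m i} ⊆ V := by
  let : MetricSpace (ℕ → ℕ) := PiNat.metricSpaceNatNat
  have hK : IsCompact (Iic m) := Icc_bot (a := m) ▸ isCompact_Icc
  obtain ⟨δ, hδ, hδV⟩ := hK.exists_thickening_subset_open hV hmV
  obtain ⟨n, hn⟩ := exists_pow_lt_of_lt_one hδ (one_half_lt_one (α := ℝ))
  refine ⟨n, fun x hx => hδV (Metric.mem_thickening_iff.2 ⟨x ⊓ m, mem_Iic.2 inf_le_right, ?_⟩)⟩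
  have hcyl : x ∈ PiNat.cylinder (x ⊓ m) n :=
    PiNat.mem_cylinder_iff.2 fun i hi => (min_eq_left (hx i hi)).symm
  exact (PiNat.mem_cylinder_iff_dist_le.1 hcyl).trans_lt hn

theorem exists_isCompact_le_measure_image {C : Type*} [TopologicalSpace C] [MeasurableSpace C]
    {ν : Measure C} [ν.OuterRegular] {p : (ℕ → ℕ) → C} (hp : Continuous p)
    {c : ENNReal} (hc : c < ν (range p)) :
    ∃ K : Set (ℕ → ℕ), IsCompact K ∧ c ≤ ν (p '' K) := by
  obtain ⟨m, hm⟩ := exists_forall_lt_measure_image_initial_le hc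
  refine ⟨Iic m, Icc_bot (a := m) ▸ isCompact_Icc, ?_⟩
  by_contra! hlt
  obtain ⟨U, hmU, hU, hνU⟩ := (p '' Iic m).exists_isOpen_lt_of_lt c hlt
  obtain ⟨n, hn⟩ := exists_initial_le_subset_of_Iic_subset (hU.preimage hp)
    (image_subset_iff.1 hmU)
  exact lt_irrefl c ((hm n).trans_le ((measure_mono (image_subset_iff.2 hn)).trans hνU.le))

theorem exists_isCompact_seq_measure_range_sdiff_eq_zero {C : Type*} [TopologicalSpace C]
    [T2Space C] [MeasurableSpace C] [OpensMeasurableSpace C]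
    (ν : Measure C) [IsFiniteMeasure ν] [ν.OuterRegular] {p : (ℕ → ℕ) → C} (hp : Continuous p) :
    ∃ K : ℕ → Set (ℕ → ℕ), (∀ n, IsCompact (K n)) ∧ ν (range p \ ⋃ n, p '' K n) = 0 := by
  rcases eq_zero_or_pos (ν (range p)) with h0 | hpos
  · exact ⟨fun _ => ∅, fun _ => isCompact_empty, measure_mono_null sdiff_subset h0⟩
  obtain ⟨u, -, hu, hlim⟩ := exists_seq_strictMono_tendsto' hpos
  choose K hK hKu using fun n => exists_isCompact_le_measure_image hp (hu n).2
  refine ⟨K, hK, ?_⟩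
  have hmeas : MeasurableSet (⋃ n, p '' K n) :=
    .iUnion fun n => ((hK n).image hp).isClosed.measurableSet
  have hle : ν (range p) ≤ ν (⋃ n, p '' K n) := le_of_tendsto' hlim fun n =>
    (hKu n).trans (measure_mono (subset_iUnion (fun n => p '' K n) n))
  rw [measure_sdiff (iUnion_subset fun n => image_subset_range _ _) hmeas.nullMeasurableSet
    (measure_ne_top _ _)]
  exact tsub_eq_zero_of_le hle

end Capacitability

section Selectors

open Set

theorem exists_measurable_ae_section_of_continuous {C : Type*} [TopologicalSpace C] [T2Space C]
    [MeasurableSpace C] [OpensMeasurableSpace C] (ν : Measure C) [IsFiniteMeasure ν]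
    [ν.OuterRegular] {p : (ℕ → ℕ) → C} (hp : Continuous p) :
    ∃ s : C → ℕ → ℕ, Measurable s ∧ ∀ᵐ c ∂ν, c ∈ range p → p (s c) = c := by
  obtain ⟨K, hK, hnull⟩ := exists_isCompact_seq_measure_range_sdiff_eq_zero ν hp
  choose s hs hps using fun n => exists_measurable_section_of_isCompact hp (hK n)
  obtain ⟨g, hg, hgs⟩ := exists_measurable_eq_on_iUnion
    (fun n => ((hK n).image hp).isClosed.measurableSet) hs
  refine ⟨g, hg, ?_⟩
  filter_upwards [measure_eq_zero_iff_ae_notMem.1 hnull] with c hc hcp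
  obtain ⟨n, hcn, hgc⟩ := hgs c (not_not.1 fun h => hc ⟨hcp, h⟩)
  rw [hgc, hps n c hcn]

theorem exists_nat_nat_continuous_surjective_continuous_comp {Y C : Type*} [TopologicalSpace Y]
    [PolishSpace Y] [MeasurableSpace Y] [BorelSpace Y] [Nonempty Y] [TopologicalSpace C]
    [SecondCountableTopology C] [MeasurableSpace C] [OpensMeasurableSpace C] {p : Y → C}
    (hp : Measurable p) :
    ∃ h : (ℕ → ℕ) → Y, Continuous h ∧ Function.Surjective h ∧ Continuous (p ∘ h) := by
  obtain ⟨τ, hτ_le, hpτ, hτ⟩ := hp.exists_continuous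
  obtain ⟨h, hh, hh_surj⟩ := @PolishSpace.exists_nat_nat_continuous_surjective Y τ hτ _
  exact ⟨h, continuous_le_rng hτ_le hh, hh_surj, @Continuous.comp _ _ _ _ τ _ _ _ hpτ hh⟩

theorem exists_measurable_ae_section {Y C : Type*} [MeasurableSpace Y] [StandardBorelSpace Y]
    [Nonempty Y] [MeasurableSpace C] [StandardBorelSpace C] (ν : Measure C) [IsFiniteMeasure ν]
    {p : Y → C} (hp : Measurable p) :
    ∃ s : C → Y, Measurable s ∧ ∀ᵐ c ∂ν, c ∈ range p → p (s c) = c := by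
  let := upgradeStandardBorel Y
  let := upgradeStandardBorel C
  obtain ⟨h, hh, hh_surj, hph⟩ := exists_nat_nat_continuous_surjective_continuous_comp hp
  obtain ⟨s, hs, hps⟩ := exists_measurable_ae_section_of_continuous ν hph
  refine ⟨h ∘ s, hh.measurable.comp hs, ?_⟩
  filter_upwards [hps] with c hc hcp
  exact hc (hh_surj.range_comp p ▸ hcp)

theorem exists_measurable_nat_bool_preimage_prodMap_eq {Ω X : Type*} [MeasurableSpace Ω]
    [MeasurableSpace X] {G : Set (Ω × X)} (hG : MeasurableSet G) :
    ∃ (φ : Ω → ℕ → Bool) (G' : Set ((ℕ → Bool) × X)),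
      Measurable φ ∧ MeasurableSet G' ∧ Prod.map φ id ⁻¹' G' = G := by
  classical
  rw [← generateFrom_prod] at hG
  induction hG with
  | basic u hu =>
    obtain ⟨A, hA, B, hB, rfl⟩ := hu
    refine ⟨fun ω _ => decide (ω ∈ A), {b | b 0 = true} ×ˢ B, ?_, ?_, ?_⟩
    · refine measurable_pi_lambda _ fun _ => measurable_to_bool ?_
      convert show MeasurableSet A from hA
      ext
      simp
    · exact (measurableSet_eq_fun (measurable_pi_apply 0) measurable_const).prod hB
    · ext z
      simp
  | empty => exact ⟨fun _ _ => true, ∅, measurable_const, .empty, preimage_empty⟩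
  | compl t _ ih =>
    obtain ⟨φ, G', hφ, hG', rfl⟩ := ih
    exact ⟨φ, G'ᶜ, hφ, hG'.compl, rfl⟩
  | iUnion f _ ih =>
    choose φ G' hφ hG' hf using ih
    let row (n : ℕ) (b : ℕ → Bool) : ℕ → Bool := fun k => b (Nat.pair n k)
    have hrow (n : ℕ) : Measurable (row n) := measurable_pi_lambda _ fun _ => measurable_pi_apply _
    let φ' : Ω → ℕ → Bool := fun ω n => φ n.unpair.1 ω n.unpair.2
    have hφ' : Measurable φ' := measurable_pi_lambda _ fun n => (measurable_pi_apply _).comp (hφ _)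
    have row_comp (n : ℕ) : row n ∘ φ' = φ n := by
      ext
      simp [row, φ']
    refine ⟨φ', ⋃ n, Prod.map (row n) id ⁻¹' G' n, hφ',
      .iUnion fun n => ((hrow n).prodMap measurable_id) (hG' n), ?_⟩
    simp only [preimage_iUnion, ← preimage_comp, Prod.map_comp_map, row_comp, Function.comp_id, hf]

theorem exists_measurable_ae_selector {Ω X : Type*} [MeasurableSpace Ω] (μ : Measure Ω)
    [SFinite μ] [MeasurableSpace X] [StandardBorelSpace X] [Nonempty X] {G : Set (Ω × X)}
    (hG : MeasurableSet G) :
    ∃ s : Ω → X, Measurable s ∧ ∀ᵐ ω ∂μ, (∃ x, (ω, x) ∈ G) → (ω, s ω) ∈ G := by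
  obtain ⟨φ, G', hφ, hG', rfl⟩ := exists_measurable_nat_bool_preimage_prodMap_eq hG
  rcases G'.eq_empty_or_nonempty with rfl | hne
  · exact ⟨fun _ => Classical.arbitrary X, measurable_const, by simp⟩
  have : Nonempty G' := hne.to_subtype
  have : StandardBorelSpace G' := hG'.standardBorel
  have hfst : Measurable fun z : G' => z.1.1 := measurable_fst.comp measurable_subtype_coe
  obtain ⟨t, ht, ht_ae⟩ := exists_measurable_ae_section (μ.toFinite.map φ) hfst
  refine ⟨fun ω => (t (φ ω)).1.2,
    measurable_snd.comp (measurable_subtype_coe.comp (ht.comp hφ)), ?_⟩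
  rw [← ae_toFinite]
  filter_upwards [ae_of_ae_map hφ.aemeasurable ht_ae] with ω hω
  rintro ⟨x, hx⟩
  have hφω : (t (φ ω)).1.1 = φ ω := hω ⟨⟨_, hx⟩, rfl⟩
  have hpair : Prod.map φ id (ω, (t (φ ω)).1.2) = (t (φ ω)).1 := Prod.ext hφω.symm rfl
  rw [mem_preimage, hpair]
  exact (t (φ ω)).2

theorem exists_measurable_selector {Ω X : Type*} [MeasurableSpace Ω] (μ : Measure Ω) [SFinite μ]
    [μ.IsComplete] [MeasurableSpace X] [StandardBorelSpace X] [Nonempty X] {G : Set (Ω × X)}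
    (hG : MeasurableSet G) :
    ∃ s : Ω → X, Measurable s ∧ ∀ ω, (∃ x, (ω, x) ∈ G) → (ω, s ω) ∈ G := by
  obtain ⟨s, hs, hs_ae⟩ := exists_measurable_ae_selector μ hG
  have exists_correction (ω : Ω) : ∃ x : X, ((∃ x, (ω, x) ∈ G) → (ω, x) ∈ G) ∧
      (((∃ x, (ω, x) ∈ G) → (ω, s ω) ∈ G) → s ω = x) := by
    by_cases h : (∃ x, (ω, x) ∈ G) → (ω, s ω) ∈ G
    · exact ⟨s ω, h, fun _ => rfl⟩
    · obtain ⟨⟨x, hx⟩, -⟩ := Classical.not_imp.1 h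
      exact ⟨x, fun _ => hx, fun h' => absurd h' h⟩
  choose t htG hst using exists_correction
  exact ⟨t, hs.congr_ae (hs_ae.mono fun ω hω => hst ω hω), htG⟩

theorem measurableSet_exists_mem {Ω X : Type*} [MeasurableSpace Ω] (μ : Measure Ω) [SFinite μ]
    [μ.IsComplete] [MeasurableSpace X] [StandardBorelSpace X] {G : Set (Ω × X)}
    (hG : MeasurableSet G) : MeasurableSet {ω | ∃ x, (ω, x) ∈ G} := by
  rcases isEmpty_or_nonempty X with hX | hX
  · simp
  obtain ⟨s, hs, hsG⟩ := exists_measurable_selector μ hG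
  have hset : {ω | ∃ x, (ω, x) ∈ G} = (fun ω => (ω, s ω)) ⁻¹' G :=
    Set.ext fun ω => ⟨hsG ω, fun h => ⟨s ω, h⟩⟩
  exact hset ▸ (measurable_id.prodMk hs) hG

end Selectors

section ConvexCombinations

/-- The Carathéodory representations of `x` over `s` indexed by `ι`: the pairs of a weight vector in
the standard simplex and a family of points of `s` whose weighted sum is `x`. The points of weight
zero are also required to lie in `s`. -/
def caratheodoryRepresentations {E : Type*} [AddCommGroup E] [Module ℝ E] (ι : Type*) [Fintype ι]
    (s : Set E) (x : E) : Set ((ι → ℝ) × (ι → E)) :=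
  {z | z.1 ∈ stdSimplex ℝ ι ∧ (∀ i, z.2 i ∈ s) ∧ x = ∑ i, z.1 i • z.2 i}

theorem nonempty_caratheodoryRepresentations {E : Type*} [AddCommGroup E] [Module ℝ E]
    [FiniteDimensional ℝ E] {ι : Type*} [Fintype ι] (hι : Module.finrank ℝ E < Fintype.card ι)
    {s : Set E} {x : E} (hx : x ∈ convexHull ℝ s) :
    (caratheodoryRepresentations ι s x).Nonempty := by
  obtain ⟨κ, _, z, w, hzs, hz, hw, hw_sum, rfl⟩ := eq_pos_convex_span_of_mem_convexHull hx
  have : Nonempty κ := not_isEmpty_iff.1 fun _ => by simp at hw_sum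
  have hcard : Fintype.card κ ≤ Fintype.card ι :=
    hz.card_le_finrank_succ.trans ((Nat.succ_le_succ (Submodule.finrank_le _)).trans hι)
  obtain ⟨e⟩ := Function.Embedding.nonempty_of_card_le hcard
  let a : ι → ℝ := Function.extend e w 0
  let y : ι → E := z ∘ Function.invFun e
  have ha_apply (k : κ) : a (e k) = w k := e.injective.extend_apply _ _ _
  have ha_zero (i : ι) (hi : i ∉ Set.range e) : a i = 0 := Function.extend_apply' _ _ _ hi
  have hy_apply (k : κ) : y (e k) = z k := congrArg z (Function.leftInverse_invFun e.injective k)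
  have ha_nonneg (i : ι) : 0 ≤ a i := by
    by_cases hi : i ∈ Set.range e
    · obtain ⟨k, rfl⟩ := hi
      exact (hw k).le.trans_eq (ha_apply k).symm
    · exact (ha_zero i hi).ge
  have ha_sum : ∑ k, w k = ∑ i, a i :=
    Fintype.sum_of_injective e e.injective _ _ ha_zero fun k => (ha_apply k).symm
  have hay_sum : ∑ k, w k • z k = ∑ i, a i • y i :=
    Fintype.sum_of_injective e e.injective _ _ (fun i hi => by rw [ha_zero i hi, zero_smul])
      fun k => by rw [ha_apply, hy_apply]
  exact ⟨(a, y), ⟨ha_nonneg, ha_sum ▸ hw_sum⟩, fun i => hzs ⟨_, rfl⟩, hay_sum⟩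

variable {Ω : Type*} [MeasurableSpace Ω] {E : Type*} [NormedAddCommGroup E] [NormedSpace ℝ E]
  [MeasurableSpace E] [BorelSpace E] {ι : Type*} [Fintype ι]

theorem measurableSet_mem_caratheodoryRepresentations [SecondCountableTopology E]
    {F : Ω → Set E} (hF : MeasurableSet {p : Ω × E | p.2 ∈ F p.1}) {f : Ω → E}
    (hf : Measurable f) :
    MeasurableSet {p : Ω × ((ι → ℝ) × (ι → E)) |
      p.2 ∈ caratheodoryRepresentations ι (F p.1) (f p.1)} := by
  have hweights : MeasurableSet {p : Ω × ((ι → ℝ) × (ι → E)) | p.2.1 ∈ stdSimplex ℝ ι} :=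
    measurable_snd.fst (isClosed_stdSimplex ℝ ι).measurableSet
  have hpoint (i : ι) : MeasurableSet {p : Ω × ((ι → ℝ) × (ι → E)) | p.2.2 i ∈ F p.1} := by
    have hproj : Measurable fun p : Ω × ((ι → ℝ) × (ι → E)) => (p.1, p.2.2 i) := by fun_prop
    exact hproj hF
  have hpoints : MeasurableSet {p : Ω × ((ι → ℝ) × (ι → E)) | ∀ i, p.2.2 i ∈ F p.1} := by
    rw [Set.ofPred_forall]
    exact .iInter hpoint
  have hsum : MeasurableSet
      {p : Ω × ((ι → ℝ) × (ι → E)) | f p.1 = ∑ i, p.2.1 i • p.2.2 i} :=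
    measurableSet_eq_fun (by fun_prop) (by fun_prop)
  exact hweights.inter (hpoints.inter hsum)

variable [FiniteDimensional ℝ E]

theorem exists_measurable_mem_caratheodoryRepresentations (μ : Measure Ω) [SFinite μ]
    [μ.IsComplete] (hι : Module.finrank ℝ E < Fintype.card ι) {F : Ω → Set E}
    (hF : MeasurableSet {p : Ω × E | p.2 ∈ F p.1}) {f : Ω → E} (hf : Measurable f)
    (hfF : ∀ ω, f ω ∈ convexHull ℝ (F ω)) :
    ∃ z : Ω → (ι → ℝ) × (ι → E), Measurable z ∧
      ∀ ω, z ω ∈ caratheodoryRepresentations ι (F ω) (f ω) := by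
  obtain ⟨z, hz, hzF⟩ := exists_measurable_selector μ
    (measurableSet_mem_caratheodoryRepresentations (ι := ι) hF hf)
  exact ⟨z, hz, fun ω => hzF ω (nonempty_caratheodoryRepresentations hι (hfF ω))⟩

theorem measurable_caratheodory_representation_general {μ : Measure Ω} [SFinite μ] [μ.IsComplete]
    (hι : Module.finrank ℝ E < Fintype.card ι) (F : Ω → Set E)
    (hF : MeasurableSet {p : Ω × E | p.2 ∈ F p.1}) (f : Ω → E) (hf : Measurable f)
    (hfF : ∀ ω, (F ω).Nonempty → f ω ∈ convexHull ℝ (F ω)) :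
    ∃ (g : ι → Ω → E) (α : ι → Ω → ℝ),
      (∀ k, Measurable (g k)) ∧
      (∀ k ω, (F ω).Nonempty → g k ω ∈ F ω) ∧
      (∀ k, Measurable (α k)) ∧
      (∀ k ω, 0 ≤ α k ω) ∧
      (∀ ω, ∑ k, α k ω = 1) ∧
      (∀ ω, f ω = ∑ k, α k ω • g k ω) := by
  -- Where `F ω` is empty, the selectors are unconstrained: replace it by the whole space.
  let F' : Ω → Set E := fun ω => {x | (F ω).Nonempty → x ∈ F ω}
  have hF' : MeasurableSet {p : Ω × E | p.2 ∈ F' p.1} :=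
    (measurable_fst (measurableSet_exists_mem μ hF)).imp hF
  have hfF' (ω : Ω) : f ω ∈ convexHull ℝ (F' ω) := by
    by_cases hω : (F ω).Nonempty
    · simpa [F', hω] using hfF ω hω
    · simp [F', hω]
  obtain ⟨z, hz, hzF⟩ := exists_measurable_mem_caratheodoryRepresentations μ hι hF' hf hfF'
  exact ⟨fun k ω => (z ω).2 k, fun k ω => (z ω).1 k, fun k => (measurable_pi_apply k).comp hz.snd,
    fun k ω => (hzF ω).2.1 k, fun k => (measurable_pi_apply k).comp hz.fst,
    fun k ω => (hzF ω).1.1 k, fun ω => (hzF ω).1.2, fun ω => (hzF ω).2.2⟩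

end ConvexCombinations

/-- Measurable Carathéodory representation: if `F : Ω → 𝒫(ℝ^d)` has measurable graph
(on a complete probability space), then any measurable selector `f` of `ω ↦ conv (F ω)`
can be written a.s. as `f = ∑_{k=1}^{d+1} α k • g k` with measurable selectors `g k` of `F`
and measurable coefficients `α k ≥ 0`, `∑ α k = 1`. -/
theorem measurable_caratheodory_representation
    {Ω : Type*} {ℋ : MeasurableSpace Ω} {μ : Measure Ω} [IsProbabilityMeasure μ]
    [μ.IsComplete] {d : ℕ}
    (F : Ω → Set (EuclideanSpace ℝ (Fin d)))
    (hgr : MeasurableSet {p : Ω × EuclideanSpace ℝ (Fin d) | p.2 ∈ F p.1})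
    (f : Ω → EuclideanSpace ℝ (Fin d)) (hfmeas : Measurable f)
    (hfsel : ∀ ω, (F ω).Nonempty → f ω ∈ convexHull ℝ (F ω)) :
    ∃ (g : Fin (d + 1) → Ω → EuclideanSpace ℝ (Fin d)) (α : Fin (d + 1) → Ω → ℝ),
      (∀ k, Measurable (g k)) ∧
      (∀ k ω, (F ω).Nonempty → g k ω ∈ F ω) ∧
      (∀ k, Measurable (α k)) ∧
      (∀ k ω, 0 ≤ α k ω) ∧
      (∀ ω, ∑ k, α k ω = 1) ∧
      (∀ᵐ ω ∂μ, f ω = ∑ k, α k ω • g k ω) := by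
  obtain ⟨g, α, hg, hgF, hα, hα0, hα1, hsum⟩ :=
    measurable_caratheodory_representation_general (μ := μ) (ι := Fin (d + 1)) (by simp) F hgr f
      hfmeas hfsel
  exact ⟨g, α, hg, hgF, hα, hα0, hα1, .of_forall hsum⟩
end

section
/- Let (Ω, ℱ, P) be a probability space with filtration (ℱ_n)_{n=0}^N (each ℱ_n complete), and let G_n : Ω → 𝒫(ℝ^d), n = 0,…,N, be ℱ_n-measurable set-valued maps with nonempty relatively open convex values. Define recursively W_N = cl G_N and W_{n-1} = cl(G_{n-1} ∩ ri(conv K(W_n, ℱ_{n-1}))) for 1 ≤ n ≤ N, where K(W_n, ℱ_{n-1}) is the support of the regular conditional upper distribution of W_n given ℱ_{n-1}. Then the following are equivalent: (a) there exist an adapted process (x_n)_{n=0}^N with x_n(ω) ∈ G_n(ω) a.s. for each n and a probability measure Q equivalent to P under which x is a martingale; (b) W_n ≠ ∅ a.s. for n = 0,…,N−1. -/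
open MeasureTheory
open scoped Classical

/-- The space of nonempty closed subsets of `ℝ^d`. -/
def CL (d : ℕ) : Type :=
  {C : Set (EuclideanSpace ℝ (Fin d)) // IsClosed C ∧ C.Nonempty}

/-- The Effros σ-algebra on `CL d`, generated by the sets
`A_V = {D : D ∩ V ≠ ∅}` for open `V`. -/
instance effros (d : ℕ) : MeasurableSpace (CL d) :=
  MeasurableSpace.generateFrom
    {A | ∃ V : Set (EuclideanSpace ℝ (Fin d)), IsOpen V ∧
      A = {D : CL d | (D.1 ∩ V).Nonempty}}

/-- Bundle a set as an element of `CL d`, replacing it by the whole space when it is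
not closed and nonempty (the `F_*` convention of the paper). -/
noncomputable def bundle {d : ℕ} (S : Set (EuclideanSpace ℝ (Fin d))) : CL d :=
  if h : IsClosed S ∧ S.Nonempty then ⟨S, h⟩
  else ⟨Set.univ, isClosed_univ, Set.univ_nonempty⟩

/-!
Call `z` arbitrage-free for a set if it lies in the relative interior of its convex hull. Under some
equivalent measure, `z` is the conditional mean of an arbitrage-free point of a random set `F`
exactly when `z` is arbitrage-free for the conditional support `K` of `F`. For the existence part,
the increments from `z` are weighted with a Gaussian factor: the moment generating function of the
weighted increments is coercive modulo the directions in which they vanish, its gradient is zero at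
a minimiser, and a measurable choice of minimisers makes the increment conditionally centred.

If every `W n` is nonempty, one starts from an arbitrage-free selection of `W 0` and picks the
successive arbitrage-free points one step at a time; each step provides its own measure, and these
are combined backwards in time. Conversely, a martingale selection is arbitrage-free for each `W n`,
by decreasing induction on `n`, because a strategy that never loses on a centred increment almost
surely gains nothing.
-/

open Filter ProbabilityTheory Set Topology
open scoped RealInnerProductSpace

section NoArbitrage

variable {E : Type*} [NormedAddCommGroup E] [InnerProductSpace ℝ E]

/-- The no-arbitrage condition: a strategy `p` that loses nothing against the increments `y - z`
gains nothing. For `l = 𝓟 C` the increments start at `z` and end in the set `C`; for `l = ae ν` the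
random end point has distribution `ν`. -/
def NoArbitrage (l : Filter E) (z : E) : Prop :=
  ∀ p : E, (∀ᶠ y in l, ⟪p, y - z⟫ ≤ 0) → ∀ᶠ y in l, ⟪p, y - z⟫ = 0

lemma noArbitrage_congr {l l' : Filter E} {z : E}
    (h : ∀ F : Set E, IsClosed F → Convex ℝ F → (F ∈ l ↔ F ∈ l')) :
    NoArbitrage l z ↔ NoArbitrage l' z := by
  have hle (p : E) : (∀ᶠ y in l, ⟪p, y - z⟫ ≤ 0) ↔ ∀ᶠ y in l', ⟪p, y - z⟫ ≤ 0 := by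
    refine h _ (isClosed_le (by fun_prop) continuous_const) ?_
    simpa only [inner_sub_right, sub_nonpos, innerₛₗ_apply_apply] using
      convex_halfSpace_le (innerₛₗ ℝ p).isLinear _
  have heq (p : E) : (∀ᶠ y in l, ⟪p, y - z⟫ = 0) ↔ ∀ᶠ y in l', ⟪p, y - z⟫ = 0 := by
    refine h _ (isClosed_eq (by fun_prop) continuous_const) ?_
    simpa only [inner_sub_right, sub_eq_zero, innerₛₗ_apply_apply] using
      convex_hyperplane (innerₛₗ ℝ p).isLinear _
  simp only [NoArbitrage, hle, heq]

lemma noArbitrage_principal_closure {C : Set E} {z : E} :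
    NoArbitrage (𝓟 (closure C)) z ↔ NoArbitrage (𝓟 C) z :=
  noArbitrage_congr fun _ hF _ => by simp only [mem_principal, hF.closure_subset_iff]

lemma noArbitrage_principal_convexHull {C : Set E} {z : E} :
    NoArbitrage (𝓟 (convexHull ℝ C)) z ↔ NoArbitrage (𝓟 C) z :=
  noArbitrage_congr fun _ _ hF => by simp only [mem_principal, hF.convexHull_subset_iff]

lemma noArbitrage_ae_iff_support [MeasurableSpace E] [HereditarilyLindelofSpace E]
    {ν : Measure E} {z : E} :
    NoArbitrage (ae ν) z ↔ NoArbitrage (𝓟 ν.support) z :=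
  noArbitrage_congr fun _ hF _ =>
    ⟨Measure.support_subset_of_isClosed hF, mem_of_superset Measure.support_mem_ae⟩

lemma noArbitrage_principal_of_forall_exists_extension {C : Set E} {z : E}
    (h : ∀ y ∈ C, ∃ t : ℝ, 0 < t ∧ z + t • (z - y) ∈ C) : NoArbitrage (𝓟 C) z := by
  intro p hp y hy
  obtain ⟨t, ht, hmem⟩ := h y hy
  have hextension : ⟪p, z + t • (z - y) - z⟫ ≤ 0 := hp hmem
  have hreflect : z + t • (z - y) - z = (-t) • (y - z) := by module
  rw [hreflect, inner_smul_right] at hextension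
  have hy_nonpos : ⟪p, y - z⟫ ≤ 0 := hp hy
  exact le_antisymm hy_nonpos (by nlinarith)

lemma add_coe_direction_mem_intrinsicInterior {C : Set E} {z : E} (hz : z ∈ affineSpan ℝ C)
    (v : (affineSpan ℝ C).direction) :
    z + v ∈ intrinsicInterior ℝ C ↔
      v ∈ interior {w : (affineSpan ℝ C).direction | z + (w : E) ∈ C} := by
  have : Nonempty (affineSpan ℝ C) := ⟨⟨z, hz⟩⟩
  let base : affineSpan ℝ C := ⟨z, hz⟩
  have hcoe (w : (affineSpan ℝ C).direction) : ((w +ᵥ base : affineSpan ℝ C) : E) = z + w := by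
    simp [base, add_comm]
  have hpre : {w : (affineSpan ℝ C).direction | z + (w : E) ∈ C} =
      Homeomorph.vaddConst base ⁻¹' ((↑) ⁻¹' C) := by
    ext w
    simp [base, add_comm]
  rw [hpre, ← Homeomorph.preimage_interior, intrinsicInterior, ← hcoe v]
  exact Subtype.coe_injective.mem_set_image

lemma eventually_extension_mem_intrinsicInterior {C : Set E} {y z : E}
    (hz : z ∈ intrinsicInterior ℝ C) (hy : y ∈ C) :
    ∀ᶠ t : ℝ in 𝓝[>] 0, z + t • (z - y) ∈ intrinsicInterior ℝ C := by
  have hz' : z ∈ affineSpan ℝ C := subset_affineSpan ℝ C (intrinsicInterior_subset hz)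
  let v : (affineSpan ℝ C).direction :=
    ⟨z - y, AffineSubspace.vsub_mem_direction hz' (subset_affineSpan ℝ C hy)⟩
  have hv (t : ℝ) : z + t • (z - y) = z + ((t • v : (affineSpan ℝ C).direction) : E) := rfl
  simp only [hv, add_coe_direction_mem_intrinsicInterior hz']
  have hcont : Continuous fun t : ℝ => t • v := by fun_prop
  refine nhdsWithin_le_nhds (hcont.continuousAt.preimage_mem_nhds (isOpen_interior.mem_nhds ?_))
  rw [zero_smul, ← add_coe_direction_mem_intrinsicInterior hz']
  simpa using hz

lemma exists_clm_nonpos_of_zero_notMem_interior {V : Type*} [NormedAddCommGroup V]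
    [NormedSpace ℝ V] {C : Set V} (hC : Convex ℝ C) (hint : (interior C).Nonempty)
    (h0 : 0 ∉ interior C) : ∃ f : V →L[ℝ] ℝ, (∀ v ∈ C, f v ≤ 0) ∧ ∃ v ∈ C, f v ≠ 0 := by
  obtain ⟨f, hf0, hf⟩ := geometric_hahn_banach_of_nonempty_interior_point hC h0 hint
  refine ⟨f, by simpa using hf, ?_⟩
  by_contra! hvanish
  have hker : f.toLinearMap.ker = ⊤ :=
    Submodule.eq_top_of_nonempty_interior' _ (hint.mono (interior_mono hvanish))
  exact hf0 (ContinuousLinearMap.ext fun v => LinearMap.congr_fun (LinearMap.ker_eq_top.1 hker) v)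

variable [FiniteDimensional ℝ E]

lemma NoArbitrage.mem_closure {C : Set E} {z : E} (hC : Convex ℝ C) (hne : C.Nonempty)
    (h : NoArbitrage (𝓟 C) z) : z ∈ closure C := by
  by_contra hz
  obtain ⟨f, u, hfC, hfz⟩ := geometric_hahn_banach_closed_point hC.closure isClosed_closure hz
  let p := (InnerProductSpace.toDual ℝ E).symm f
  have hneg : ∀ y ∈ C, ⟪p, y - z⟫ < 0 := fun y hy => by
    rw [InnerProductSpace.toDual_symm_apply, map_sub]
    linarith [hfC y (subset_closure hy)]
  obtain ⟨y, hy⟩ := hne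
  exact (hneg y hy).ne (h p (fun y hy => (hneg y hy).le) hy)

theorem noArbitrage_principal_iff_mem_intrinsicInterior {C : Set E} {z : E} (hC : Convex ℝ C)
    (hne : C.Nonempty) : NoArbitrage (𝓟 C) z ↔ z ∈ intrinsicInterior ℝ C := by
  refine ⟨fun h => ?_, fun hz => ?_⟩
  · have hz : z ∈ affineSpan ℝ C :=
      closure_minimal (subset_affineSpan ℝ C) (AffineSubspace.closed_of_finiteDimensional _)
        (h.mem_closure hC hne)
    let V := (affineSpan ℝ C).direction
    let C' : Set V := {v | z + (v : E) ∈ C}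
    have hC' : Convex ℝ C' := (hC.translate_preimage_right z).linear_preimage V.subtype
    obtain ⟨m, hm⟩ := hne.intrinsicInterior hC
    have hint : (interior C').Nonempty := by
      refine ⟨⟨m - z, AffineSubspace.vsub_mem_direction
        (subset_affineSpan ℝ C (intrinsicInterior_subset hm)) hz⟩, ?_⟩
      rw [← add_coe_direction_mem_intrinsicInterior hz]
      simpa only [add_sub_cancel] using hm
    by_contra hzC
    have h0 : (0 : V) ∉ interior C' := by
      rw [← add_coe_direction_mem_intrinsicInterior hz]
      simpa only [ZeroMemClass.coe_zero, add_zero] using hzC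
    obtain ⟨f, hf, v, hv, hfv⟩ := exists_clm_nonpos_of_zero_notMem_interior hC' hint h0
    let p : V := (InnerProductSpace.toDual ℝ V).symm f
    have hp (y : E) (hy : y ∈ C) : ∃ w ∈ C', y = z + (w : E) ∧ ⟪(p : E), y - z⟫ = f w := by
      let w : V := ⟨y - z, AffineSubspace.vsub_mem_direction (subset_affineSpan ℝ C hy) hz⟩
      have hw : y = z + w := (add_sub_cancel z y).symm
      exact ⟨w, show z + (w : E) ∈ C from hw ▸ hy, hw, InnerProductSpace.toDual_symm_apply (x := w)⟩
    have hpC : ∀ y ∈ C, ⟪(p : E), y - z⟫ ≤ 0 := fun y hy => by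
      obtain ⟨w, hw, -, hpw⟩ := hp y hy
      exact hpw.trans_le (hf w hw)
    obtain ⟨w, -, hvw, hpw⟩ := hp _ hv
    have hvw : v = w := Subtype.coe_injective (add_left_cancel hvw)
    exact hfv (hvw ▸ hpw ▸ h p hpC hv)
  · refine noArbitrage_principal_of_forall_exists_extension fun y hy => ?_
    obtain ⟨t, hmem, ht⟩ := ((eventually_extension_mem_intrinsicInterior hz hy).and
      self_mem_nhdsWithin).exists
    exact ⟨t, ht, intrinsicInterior_subset hmem⟩

lemma convex_intrinsicInterior {C : Set E} (hC : Convex ℝ C) :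
    Convex ℝ (intrinsicInterior ℝ C) := by
  refine convex_iff_forall_pos.2 fun x hx y hy a b ha hb hab => ?_
  have hxC := intrinsicInterior_subset hx
  have hyC := intrinsicInterior_subset hy
  rw [← noArbitrage_principal_iff_mem_intrinsicInterior hC ⟨x, hxC⟩] at hx ⊢
  intro p hp
  have hpx : ⟪p, x - (a • x + b • y)⟫ ≤ 0 := hp hxC
  have hpy : ⟪p, y - (a • x + b • y)⟫ ≤ 0 := hp hyC
  have hsum : a * ⟪p, x - (a • x + b • y)⟫ + b * ⟪p, y - (a • x + b • y)⟫ = 0 := by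
    rw [← inner_smul_right, ← inner_smul_right, ← inner_add_right]
    have : a • (x - (a • x + b • y)) + b • (y - (a • x + b • y)) = 0 := by
      rw [smul_sub, smul_sub, sub_add_sub_comm, ← add_smul, hab, one_smul, sub_self]
    rw [this, inner_zero_right]
  have hpxy : ⟪p, x - (a • x + b • y)⟫ = 0 := le_antisymm hpx (by nlinarith)
  rw [inner_sub_right, sub_eq_zero] at hpxy
  simp only [inner_sub_right, ← hpxy] at hp ⊢
  simpa only [inner_sub_right] using hx p (by simpa only [inner_sub_right] using hp)

theorem noArbitrage_closure_inter_intrinsicInterior_convexHull {G K : Set E} {x : E}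
    (hG : Convex ℝ G) (hGri : G = intrinsicInterior ℝ G) (hK : K.Nonempty)
    (hne : (G ∩ intrinsicInterior ℝ (convexHull ℝ K)).Nonempty) :
    NoArbitrage (𝓟 (closure (G ∩ intrinsicInterior ℝ (convexHull ℝ K)))) x ↔
      x ∈ G ∧ NoArbitrage (𝓟 K) x := by
  have hconv := convex_convexHull ℝ K
  rw [noArbitrage_principal_closure, ← noArbitrage_principal_convexHull (C := K),
    noArbitrage_principal_iff_mem_intrinsicInterior hconv hK.convexHull]
  refine ⟨fun h => ?_, fun ⟨hxG, hxK⟩ => ?_⟩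
  · rw [noArbitrage_principal_iff_mem_intrinsicInterior
      (hG.inter (convex_intrinsicInterior hconv)) hne] at h
    exact (intrinsicInterior_subset h : _ ∈ _ ∩ _)
  · refine noArbitrage_principal_of_forall_exists_extension fun y ⟨hyG, hyK⟩ => ?_
    have hG_ext := eventually_extension_mem_intrinsicInterior (hGri ▸ hxG) hyG
    have hK_ext := eventually_extension_mem_intrinsicInterior hxK (intrinsicInterior_subset hyK)
    obtain ⟨t, ⟨htG, htK⟩, ht⟩ := ((hG_ext.and hK_ext).and self_mem_nhdsWithin).exists
    exact ⟨t, ht, hGri ▸ htG, htK⟩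

lemma noArbitrage_principal_closure_iff_mem {G : Set E} {x : E} (hG : Convex ℝ G)
    (hGri : G = intrinsicInterior ℝ G) (hne : G.Nonempty) :
    NoArbitrage (𝓟 (closure G)) x ↔ x ∈ G := by
  rw [noArbitrage_principal_closure, noArbitrage_principal_iff_mem_intrinsicInterior hG hne, ← hGri]

end NoArbitrage

section Tilting

variable {E : Type*} [NormedAddCommGroup E]

/-- The Gaussian weight of an increment `u` around `p`. The factor `(1 + ‖p‖)⁻¹` makes the weight
and the first moment `tilt p u • u` bounded by `1`, uniformly in `p`. -/
noncomputable def tilt (p u : E) : ℝ := Real.exp (-‖u - p‖ ^ 2) / (1 + ‖p‖)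

lemma tilt_pos (p u : E) : 0 < tilt p u := by
  unfold tilt
  positivity

lemma tilt_le_one (p u : E) : tilt p u ≤ 1 := by
  refine div_le_one_of_le₀ (le_trans ?_ (le_add_of_nonneg_right (norm_nonneg p))) (by positivity)
  exact Real.exp_le_one_iff.2 (neg_nonpos.2 (sq_nonneg _))

lemma norm_tilt_le_one (p u : E) : ‖tilt p u‖ ≤ 1 := by
  rw [Real.norm_of_nonneg (tilt_pos p u).le]
  exact tilt_le_one p u

lemma exp_neg_sq_mul_le_one (s : ℝ) : Real.exp (-s ^ 2) * s ≤ 1 := by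
  rw [Real.exp_neg, inv_mul_le_iff₀ (Real.exp_pos _), mul_one]
  nlinarith [Real.add_one_le_exp (s ^ 2), sq_nonneg (s - 1)]

lemma norm_tilt_smul_le_one [NormedSpace ℝ E] (p u : E) : ‖tilt p u • u‖ ≤ 1 := by
  rw [norm_smul, Real.norm_of_nonneg (tilt_pos p u).le, tilt, div_mul_eq_mul_div,
    div_le_one (by positivity)]
  calc Real.exp (-‖u - p‖ ^ 2) * ‖u‖
      ≤ Real.exp (-‖u - p‖ ^ 2) * (‖u - p‖ + ‖p‖) := by gcongr; exact norm_le_norm_sub_add u p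
    _ = Real.exp (-‖u - p‖ ^ 2) * ‖u - p‖ + Real.exp (-‖u - p‖ ^ 2) * ‖p‖ := mul_add _ _ _
    _ ≤ 1 + 1 * ‖p‖ := by
        gcongr
        · exact exp_neg_sq_mul_le_one _
        · exact Real.exp_le_one_iff.2 (neg_nonpos.2 (sq_nonneg _))
    _ = 1 + ‖p‖ := by rw [one_mul]

@[fun_prop]
lemma continuous_tilt : Continuous fun s : E × E => tilt s.1 s.2 :=
  Continuous.div₀ (by fun_prop) (by fun_prop) fun s => by positivity

variable [MeasurableSpace E]

/-- The total mass of `ν` tilted around `z + p`. -/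
noncomputable def tiltMass (ν : Measure E) (p z : E) : ℝ := ∫ y, tilt p (y - z) ∂ν

/-- The first moment, relative to `z`, of `ν` tilted around `z + p`. -/
noncomputable def tiltMoment [NormedSpace ℝ E] (ν : Measure E) (p z : E) : E :=
  ∫ y, tilt p (y - z) • (y - z) ∂ν

lemma norm_tiltMoment_le [NormedSpace ℝ E] (ν : Measure E) [IsProbabilityMeasure ν] (p z : E) :
    ‖tiltMoment ν p z‖ ≤ 1 := by
  simpa [tiltMoment] using
    norm_integral_le_of_norm_le_const (μ := ν) (.of_forall fun y => norm_tilt_smul_le_one p (y - z))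

variable [BorelSpace E] (ν : Measure E) [IsFiniteMeasure ν] (p z : E)

lemma integrable_tilt : Integrable (fun y => tilt p (y - z)) ν :=
  Integrable.of_bound (Continuous.aestronglyMeasurable (by fun_prop)) 1
    (.of_forall fun _ => norm_tilt_le_one _ _)

lemma tiltMass_pos [NeZero ν] : 0 < tiltMass ν p z := by
  refine (integral_pos_iff_support_of_nonneg (fun _ => (tilt_pos _ _).le)
    (integrable_tilt ν p z)).2 ?_
  rw [Function.support_eq_univ fun y => (tilt_pos p (y - z)).ne']
  exact NeZero.pos _

lemma tiltMass_le_one [IsProbabilityMeasure ν] : tiltMass ν p z ≤ 1 := by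
  simpa [tiltMass] using integral_mono (integrable_tilt ν p z) (integrable_const 1)
    fun y => tilt_le_one p (y - z)

variable [NormedSpace ℝ E] [SecondCountableTopology E]

lemma integrable_tilt_smul : Integrable (fun y => tilt p (y - z) • (y - z)) ν :=
  Integrable.of_bound (Continuous.aestronglyMeasurable (by fun_prop)) 1
    (.of_forall fun _ => norm_tilt_smul_le_one _ _)

lemma continuous_tiltMoment : Continuous fun s : E × E => tiltMoment ν s.1 s.2 :=
  continuous_of_dominated (fun _ => (integrable_tilt_smul ν _ _).aestronglyMeasurable)
    (fun _ => .of_forall fun _ => norm_tilt_smul_le_one _ _) (integrable_const 1)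
    (.of_forall fun _ => by fun_prop)

end Tilting

section NoArbitrageMeasure

variable {E : Type*} [NormedAddCommGroup E] [InnerProductSpace ℝ E] [MeasurableSpace E]
  {ν : Measure E}

theorem noArbitrage_ae_of_integral_smul_eq_zero [CompleteSpace E] {w : E → ℝ} {z : E}
    (hw : ∀ y, 0 < w y) (hint : Integrable (fun y => w y • (y - z)) ν)
    (h : ∫ y, w y • (y - z) ∂ν = 0) : NoArbitrage (ae ν) z := by
  intro p hp
  have hint_inner : Integrable (fun y => w y * ⟪p, y - z⟫) ν := by
    simpa only [inner_smul_right] using hint.const_inner (𝕜 := ℝ) p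
  have hzero : ∫ y, -(w y * ⟪p, y - z⟫) ∂ν = 0 := by
    simp only [integral_neg, ← inner_smul_right, integral_inner hint, h, inner_zero_right,
      neg_zero]
  have hnonneg : 0 ≤ᵐ[ν] fun y => -(w y * ⟪p, y - z⟫) := by
    filter_upwards [hp] with y hy
    exact neg_nonneg.2 (mul_nonpos_of_nonneg_of_nonpos (hw y).le hy)
  filter_upwards [(integral_eq_zero_iff_of_nonneg_ae hnonneg hint_inner.neg).1 hzero] with y hy
  exact (mul_eq_zero.1 (neg_eq_zero.1 hy)).resolve_left (hw y).ne'

lemma exists_mul_norm_le_of_pos_homogeneous {V : Type*} [NormedAddCommGroup V] [NormedSpace ℝ V]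
    [ProperSpace V] {c : V → ℝ} (hc : Continuous c)
    (hsmul : ∀ r : ℝ, 0 ≤ r → ∀ v, c (r • v) = r * c v) (hpos : ∀ v ≠ 0, 0 < c v) :
    ∃ k > 0, ∀ v, k * ‖v‖ ≤ c v := by
  obtain ⟨k, hk, hkc⟩ := (isCompact_sphere (0 : V) 1).exists_forall_le' hc.continuousOn
    fun v hv => hpos v (ne_zero_of_mem_unit_sphere ⟨v, hv⟩)
  refine ⟨k, hk, fun v => ?_⟩
  rcases eq_or_ne v 0 with rfl | hv
  · simpa using (hsmul 0 le_rfl 0).ge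
  · have hunit : ‖v‖⁻¹ • v ∈ Metric.sphere (0 : V) 1 := by
      simp [norm_smul, inv_mul_cancel₀ (norm_ne_zero_iff.2 hv)]
    calc k * ‖v‖ ≤ c (‖v‖⁻¹ • v) * ‖v‖ := by gcongr; exact hkc _ hunit
      _ = c v := by
        rw [hsmul _ (by positivity), mul_comm, mul_inv_cancel_left₀ (norm_ne_zero_iff.2 hv)]

/-- The directions in which the increments from `z` vanish almost surely. -/
def nullDirections (ν : Measure E) (z : E) : Submodule ℝ E where
  carrier := {p | ∀ᵐ y ∂ν, ⟪p, y - z⟫ = 0}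
  zero_mem' := by
    change ∀ᵐ y ∂ν, ⟪0, y - z⟫ = 0
    exact .of_forall fun _ => inner_zero_left _
  add_mem' {p q} hp hq := by
    change ∀ᵐ y ∂ν, ⟪p + q, y - z⟫ = 0
    filter_upwards [hp, hq] with y hpy hqy
    rw [inner_add_left, hpy, hqy, add_zero]
  smul_mem' r p hp := by
    change ∀ᵐ y ∂ν, ⟪r • p, y - z⟫ = 0
    filter_upwards [hp] with y hy
    rw [real_inner_smul_left, hy, mul_zero]

lemma exp_sq_mul_tilt {E : Type*} [NormedAddCommGroup E] [InnerProductSpace ℝ E] (p u : E) :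
    Real.exp (‖p‖ ^ 2) * (1 + ‖p‖) * tilt p u = Real.exp (2 * ⟪p, u⟫) * tilt 0 u := by
  have h : 1 + ‖p‖ ≠ 0 := by positivity
  have hsq : ‖p‖ ^ 2 + -‖u - p‖ ^ 2 = 2 * ⟪p, u⟫ + -‖u‖ ^ 2 := by
    rw [norm_sub_sq_real, real_inner_comm]
    ring
  calc Real.exp (‖p‖ ^ 2) * (1 + ‖p‖) * tilt p u
      = Real.exp (‖p‖ ^ 2) * Real.exp (-‖u - p‖ ^ 2) := by rw [tilt]; field_simp
    _ = Real.exp (2 * ⟪p, u⟫) * Real.exp (-‖u‖ ^ 2) := by rw [← Real.exp_add, hsq, Real.exp_add]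
    _ = Real.exp (2 * ⟪p, u⟫) * tilt 0 u := by simp [tilt]

/-- The moment generating function of the Gaussian-weighted increments from `z`; its gradient is a
positive multiple of `tiltMoment`. -/
noncomputable def tiltPotential (ν : Measure E) (z p : E) : ℝ :=
  ∫ y, Real.exp (2 * ⟪p, y - z⟫) * tilt 0 (y - z) ∂ν

lemma tiltPotential_eq (p z : E) :
    tiltPotential ν z p = Real.exp (‖p‖ ^ 2) * (1 + ‖p‖) * tiltMass ν p z := by
  simp only [tiltPotential, tiltMass, ← integral_const_mul, exp_sq_mul_tilt]

/-- The expected positive part of the Gaussian-weighted gain of the strategy `p`. -/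
noncomputable def expectedGain (ν : Measure E) (z p : E) : ℝ :=
  ∫ y, max ⟪p, tilt 0 (y - z) • (y - z)⟫ 0 ∂ν

lemma expectedGain_smul {r : ℝ} (hr : 0 ≤ r) (p z : E) :
    expectedGain ν z (r • p) = r * expectedGain ν z p := by
  simp only [expectedGain, ← integral_const_mul, real_inner_smul_left, mul_max_of_nonneg _ _ hr,
    mul_zero]

lemma norm_max_inner_tilt_smul_le {E : Type*} [NormedAddCommGroup E] [InnerProductSpace ℝ E]
    (p u : E) : ‖max ⟪p, tilt 0 u • u⟫ 0‖ ≤ ‖p‖ := by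
  rw [Real.norm_of_nonneg (le_max_right _ _)]
  refine max_le ((real_inner_le_norm _ _).trans ?_) (norm_nonneg p)
  exact mul_le_of_le_one_right (norm_nonneg p) (norm_tilt_smul_le_one 0 u)

variable [BorelSpace E] [IsFiniteMeasure ν] {z : E}

lemma integrable_exp_inner_mul_tilt (p : E) :
    Integrable (fun y => Real.exp (2 * ⟪p, y - z⟫) * tilt 0 (y - z)) ν :=
  ((integrable_tilt ν p z).const_mul (Real.exp (‖p‖ ^ 2) * (1 + ‖p‖))).congr
    (.of_forall fun _ => exp_sq_mul_tilt p _)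

lemma continuous_tiltPotential : Continuous (tiltPotential ν z) := by
  have : Continuous fun p => tiltMass ν p z :=
    continuous_of_dominated (fun p => (integrable_tilt ν p z).aestronglyMeasurable)
      (fun _ => .of_forall fun _ => norm_tilt_le_one _ _) (integrable_const 1)
      (.of_forall fun _ => by fun_prop)
  have heq : tiltPotential ν z = fun p => Real.exp (‖p‖ ^ 2) * (1 + ‖p‖) * tiltMass ν p z :=
    funext fun p => tiltPotential_eq p z
  rw [heq]
  fun_prop

lemma integrable_max_inner_tilt_smul (p : E) :
    Integrable (fun y => max ⟪p, tilt 0 (y - z) • (y - z)⟫ 0) ν :=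
  Integrable.of_bound (Continuous.aestronglyMeasurable (by fun_prop)) ‖p‖
    (.of_forall fun _ => norm_max_inner_tilt_smul_le _ _)

lemma continuous_expectedGain : Continuous (expectedGain ν z) := by
  refine continuous_iff_continuousAt.2 fun p => continuousAt_of_dominated
    (bound := fun _ => ‖p‖ + 1)
    (.of_forall fun q => (integrable_max_inner_tilt_smul q).aestronglyMeasurable) ?_
    (integrable_const _) (.of_forall fun _ => Continuous.continuousAt (by fun_prop))
  filter_upwards [continuous_norm.continuousAt.eventually_lt_const (lt_add_one ‖p‖)] with q hq
  exact .of_forall fun _ => (norm_max_inner_tilt_smul_le _ _).trans hq.le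

lemma expectedGain_eq_zero_iff {p : E} :
    expectedGain ν z p = 0 ↔ ∀ᵐ y ∂ν, ⟪p, y - z⟫ ≤ 0 := by
  refine (integral_eq_zero_iff_of_nonneg (fun _ => le_max_right _ _)
    (integrable_max_inner_tilt_smul p)).trans (eventually_congr (.of_forall fun y => ?_))
  change max ⟪p, tilt 0 (y - z) • (y - z)⟫ 0 = 0 ↔ _
  rw [max_eq_right_iff, inner_smul_right]
  exact ⟨fun h => nonpos_of_mul_nonpos_right h (tilt_pos _ _),
    mul_nonpos_of_nonneg_of_nonpos (tilt_pos _ _).le⟩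

lemma expectedGain_pos (hz : NoArbitrage (ae ν) z) {p : E} (hp : p ∉ nullDirections ν z) :
    0 < expectedGain ν z p :=
  (integral_nonneg fun _ => le_max_right _ _).lt_of_ne' fun h0 =>
    hp (hz p (expectedGain_eq_zero_iff.1 h0))

lemma exists_expectedGain_eq_of_not_noArbitrage (hz : ¬NoArbitrage (ae ν) z) :
    ∃ p, expectedGain ν z p = 0 ∧ expectedGain ν z (-p) = 1 := by
  simp only [NoArbitrage, not_forall] at hz
  obtain ⟨p, hp, hne⟩ := hz
  have hpos : 0 < expectedGain ν z (-p) := by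
    refine (integral_nonneg fun _ => le_max_right _ _).lt_of_ne' fun h0 => hne ?_
    filter_upwards [hp, expectedGain_eq_zero_iff.1 h0] with y hy hy'
    rw [inner_neg_left, neg_nonpos] at hy'
    exact le_antisymm hy hy'
  have hr := (inv_pos.2 hpos).le
  refine ⟨(expectedGain ν z (-p))⁻¹ • p, ?_, ?_⟩
  · rw [expectedGain_smul hr, expectedGain_eq_zero_iff.2 hp, mul_zero]
  · rw [← smul_neg, expectedGain_smul hr, inv_mul_cancel₀ hpos.ne']

lemma expectedGain_le_tiltPotential (p : E) : expectedGain ν z p ≤ tiltPotential ν z p := by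
  refine integral_mono (integrable_max_inner_tilt_smul p) (integrable_exp_inner_mul_tilt p)
    fun y => ?_
  have hw := tilt_pos 0 (y - z)
  refine max_le ?_ (by positivity)
  rw [inner_smul_right, mul_comm]
  gcongr
  nlinarith [Real.add_one_le_exp ⟪p, y - z⟫, Real.add_one_le_exp (2 * ⟪p, y - z⟫),
    Real.exp_pos (2 * ⟪p, y - z⟫)]

variable [FiniteDimensional ℝ E]

lemma tiltMoment_mem_orthogonal_nullDirections (p : E) :
    tiltMoment ν p z ∈ (nullDirections ν z)ᗮ := by
  refine (Submodule.mem_orthogonal _ _).2 fun h hh => ?_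
  rw [tiltMoment, ← integral_inner (integrable_tilt_smul ν p z)]
  refine integral_eq_zero_of_ae ?_
  filter_upwards [hh] with y hy
  rw [inner_smul_right, hy, mul_zero, Pi.zero_apply]

lemma tiltPotential_sub_le (p q : E) : tiltPotential ν z q - tiltPotential ν z p ≤
    2 * (Real.exp (‖q‖ ^ 2) * (1 + ‖q‖)) * ⟪q - p, tiltMoment ν q z⟫ := by
  have hint := (integrable_tilt_smul ν q z).const_inner (𝕜 := ℝ) (q - p)
  rw [tiltMoment, ← integral_inner (integrable_tilt_smul ν q z), ← integral_const_mul,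
    tiltPotential, tiltPotential, ← integral_sub (integrable_exp_inner_mul_tilt q)
      (integrable_exp_inner_mul_tilt p)]
  refine integral_mono ((integrable_exp_inner_mul_tilt q).sub (integrable_exp_inner_mul_tilt p))
    (hint.const_mul _) fun y => ?_
  let u := y - z
  have hexp : Real.exp (2 * ⟪p, u⟫) = Real.exp (2 * ⟪q, u⟫) * Real.exp (-(2 * ⟪q - p, u⟫)) := by
    rw [← Real.exp_add, inner_sub_left]
    ring_nf
  have htangent := Real.add_one_le_exp (-(2 * ⟪q - p, u⟫))
  calc Real.exp (2 * ⟪q, u⟫) * tilt 0 u - Real.exp (2 * ⟪p, u⟫) * tilt 0 u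
      = Real.exp (2 * ⟪q, u⟫) * tilt 0 u * (1 - Real.exp (-(2 * ⟪q - p, u⟫))) := by rw [hexp]; ring
    _ ≤ Real.exp (2 * ⟪q, u⟫) * tilt 0 u * (2 * ⟪q - p, u⟫) := by
        refine mul_le_mul_of_nonneg_left (by linarith) ?_
        exact mul_nonneg (Real.exp_pos _).le (tilt_pos _ _).le
    _ = 2 * (Real.exp (‖q‖ ^ 2) * (1 + ‖q‖)) * ⟪q - p, tilt q u • u⟫ := by
        rw [← exp_sq_mul_tilt, inner_smul_right]
        ring

lemma exists_mul_norm_le_tiltPotential (hz : NoArbitrage (ae ν) z) :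
    ∃ k > 0, ∀ p : (nullDirections ν z)ᗮ, k * ‖p‖ ≤ tiltPotential ν z p := by
  obtain ⟨k, hk, hgain⟩ := exists_mul_norm_le_of_pos_homogeneous
    (c := fun p : (nullDirections ν z)ᗮ => expectedGain ν z p)
    (continuous_expectedGain.comp continuous_subtype_val)
    (fun r hr p => expectedGain_smul hr (p : E) z)
    fun p hp => expectedGain_pos hz fun hpN => hp <| Subtype.ext <|
      inner_self_eq_zero.1 ((Submodule.mem_orthogonal _ _).1 p.2 p hpN)
  exact ⟨k, hk, fun p => (hgain p).trans (expectedGain_le_tiltPotential _)⟩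

theorem exists_tiltMoment_eq_zero (hz : NoArbitrage (ae ν) z) : ∃ p, tiltMoment ν p z = 0 := by
  obtain ⟨k, hk, hcoercive⟩ := exists_mul_norm_le_tiltPotential hz
  obtain ⟨p, hp⟩ := (continuous_tiltPotential.comp continuous_subtype_val).exists_forall_le
    (tendsto_atTop_mono hcoercive (tendsto_norm_cocompact_atTop.const_mul_atTop hk))
  let h : (nullDirections ν z)ᗮ :=
    ⟨-tiltMoment ν p z,
      neg_mem (tiltMoment_mem_orthogonal_nullDirections (p : E))⟩
  have hfirst_order : ∀ᶠ t : ℝ in 𝓝[>] 0, 0 ≤ ⟪(h : E), tiltMoment ν (p + t • h) z⟫ := by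
    filter_upwards [self_mem_nhdsWithin] with t (ht : 0 < t)
    have hmin := (sub_nonneg.2 (hp (p + t • h))).trans (tiltPotential_sub_le _ _)
    have hstep : ((p + t • h : (nullDirections ν z)ᗮ) : E) - p = t • (h : E) := by
      push_cast
      exact add_sub_cancel_left _ _
    rw [hstep, real_inner_smul_left] at hmin
    exact nonneg_of_mul_nonneg_right (nonneg_of_mul_nonneg_right hmin (by positivity)) ht
  have hcont : Continuous fun t : ℝ => ⟪(h : E), tiltMoment ν (p + t • h) z⟫ := by
    have := continuous_tiltMoment ν
    fun_prop
  have h0 : 0 ≤ ⟪(h : E), tiltMoment ν p z⟫ := by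
    simpa using ge_of_tendsto (hcont.tendsto 0 |>.mono_left nhdsWithin_le_nhds) hfirst_order
  exact ⟨p, real_inner_self_nonpos.1 (by simpa [h] using h0)⟩

lemma noArbitrage_ae_iff_exists_tiltMoment_eq_zero :
    NoArbitrage (ae ν) z ↔ ∃ p, tiltMoment ν p z = 0 :=
  ⟨exists_tiltMoment_eq_zero, fun ⟨p, hp⟩ =>
    noArbitrage_ae_of_integral_smul_eq_zero (fun _ => tilt_pos _ _) (integrable_tilt_smul ν p z) hp⟩

lemma noArbitrage_ae_tilted_mean [NeZero ν] (p z : E) :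
    NoArbitrage (ae ν) (z + (tiltMass ν p z)⁻¹ • tiltMoment ν p z) := by
  set e := (tiltMass ν p z)⁻¹ • tiltMoment ν p z with he
  have hsplit (y : E) : tilt p (y - z) • (y - (z + e)) =
      tilt p (y - z) • (y - z) - tilt p (y - z) • e := by
    rw [← smul_sub, sub_add_eq_sub_sub]
  have hint₁ := integrable_tilt_smul ν p z
  have hint₂ : Integrable (fun y => tilt p (y - z) • e) ν := (integrable_tilt ν p z).smul_const e
  refine noArbitrage_ae_of_integral_smul_eq_zero (w := fun y => tilt p (y - z))
    (fun _ => tilt_pos _ _) ?_ ?_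
  · simp only [hsplit]
    exact hint₁.sub hint₂
  · calc ∫ y, tilt p (y - z) • (y - (z + e)) ∂ν = tiltMoment ν p z - tiltMass ν p z • e := by
          simp only [hsplit, integral_sub hint₁ hint₂, integral_smul_const, tiltMoment, tiltMass]
      _ = 0 := by rw [he, smul_inv_smul₀ (tiltMass_pos ν p z).ne', sub_self]

end NoArbitrageMeasure

lemma exists_chain {α : Type*} {Good : ℕ → α → Prop} {Rel : ℕ → α → α → Prop}
    (h0 : ∃ a, Good 0 a) (hs : ∀ n a, Good n a → ∃ b, Good (n + 1) b ∧ Rel n a b) :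
    ∃ f : ℕ → α, ∀ n, Good n (f n) ∧ Rel n (f n) (f (n + 1)) := by
  choose next hgood hrel using hs
  let f (n : ℕ) : {a // Good n a} :=
    Nat.rec ⟨h0.choose, h0.choose_spec⟩ (fun n a => ⟨next n a a.2, hgood n a a.2⟩) n
  exact ⟨fun n => (f n).1, fun n => ⟨(f n).2, hrel n (f n).1 (f n).2⟩⟩

section EffrosMeasurable

variable {β S : Type*} {m : MeasurableSpace β} {T T' : β → Set S}

/-- Effros measurability of a set-valued map: its hits of open sets are measurable events. The
`σ`-algebra is explicit because it varies along a filtration. -/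
def EffrosMeasurable [TopologicalSpace S] (m : MeasurableSpace β) (T : β → Set S) : Prop :=
  ∀ V, IsOpen V → MeasurableSet[m] {b | (T b ∩ V).Nonempty}

namespace EffrosMeasurable

section Topology

variable [TopologicalSpace S]

lemma const (C : Set S) : EffrosMeasurable m fun _ => C :=
  fun _ _ => MeasurableSet.const _

lemma measurableSet_nonempty (hT : EffrosMeasurable m T) :
    MeasurableSet {b | (T b).Nonempty} := by
  simpa only [inter_univ] using hT univ isOpen_univ

lemma inter_isOpen (hT : EffrosMeasurable m T) {V : Set S} (hV : IsOpen V) :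
    EffrosMeasurable m fun b => T b ∩ V := fun U hU => by
  simpa only [inter_assoc] using hT (V ∩ U) (hV.inter hU)

lemma ite (hT : EffrosMeasurable m T) (hT' : EffrosMeasurable m T') {p : β → Prop}
    (hp : MeasurableSet {b | p b}) : EffrosMeasurable m fun b => if p b then T b else T' b := by
  intro V hV
  convert hp.ite (hT V hV) (hT' V hV) using 1
  ext b
  by_cases hb : p b <;> simp [Set.ite, hb]

lemma closure (hT : EffrosMeasurable m T) : EffrosMeasurable m fun b => closure (T b) :=
  fun V hV => by simpa only [closure_inter_open_nonempty_iff hV] using hT V hV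

lemma image {S' : Type*} [TopologicalSpace S'] (hT : EffrosMeasurable m T) {f : S → S'}
    (hf : Continuous f) : EffrosMeasurable m fun b => f '' T b := fun V hV => by
  simpa only [image_inter_nonempty_iff] using hT _ (hV.preimage hf)

end Topology

section Selection

variable [MetricSpace S] [TopologicalSpace.SeparableSpace S] [MeasurableSpace S] [Nonempty S]

lemma exists_inter_ball (hT : EffrosMeasurable m T) (hne : ∀ b, (T b).Nonempty) {r : ℝ}
    (hr : 0 < r) : ∃ c : β → S, Measurable c ∧ (∀ b, (T b ∩ Metric.ball (c b) r).Nonempty) ∧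
      EffrosMeasurable m fun b => T b ∩ Metric.ball (c b) r := by
  set d := TopologicalSpace.denseSeq S
  have hex (b : β) : ∃ k, (T b ∩ Metric.ball (d k) r).Nonempty := by
    obtain ⟨t, ht⟩ := hne b
    obtain ⟨k, hk⟩ := (TopologicalSpace.denseRange_denseSeq S).exists_dist_lt t hr
    exact ⟨k, t, ht, hk⟩
  have hfind : Measurable fun b => Nat.find (hex b) :=
    measurable_find hex fun k => hT _ Metric.isOpen_ball
  refine ⟨fun b => d (Nat.find (hex b)), measurable_from_nat.comp hfind,
    fun b => Nat.find_spec (hex b), fun V hV => ?_⟩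
  have hhit : {b | (T b ∩ Metric.ball (d (Nat.find (hex b))) r ∩ V).Nonempty} =
      ⋃ k, {b | Nat.find (hex b) = k} ∩ {b | (T b ∩ (Metric.ball (d k) r ∩ V)).Nonempty} := by
    ext b
    simp [inter_assoc]
  rw [hhit]
  exact MeasurableSet.iUnion fun k => (hfind (measurableSet_singleton k)).inter
    (hT _ (Metric.isOpen_ball.inter hV))

variable [BorelSpace S] [CompleteSpace S]

/-- The Kuratowski–Ryll-Nardzewski selection theorem. -/
theorem exists_measurable_mem_closure (hT : EffrosMeasurable m T)
    (hne : ∀ b, (T b).Nonempty) : ∃ f : β → S, Measurable f ∧ ∀ b, f b ∈ _root_.closure (T b) := by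
  obtain ⟨U, hU⟩ := exists_chain
    (Good := fun _ U => EffrosMeasurable m U ∧ ∀ b, (U b).Nonempty ∧ U b ⊆ T b)
    (Rel := fun n U V => ∃ c : β → S, Measurable c ∧
      ∀ b, V b = U b ∩ Metric.ball (c b) ((1 / 2) ^ n))
    ⟨T, hT, fun b => ⟨hne b, subset_rfl⟩⟩ fun n U ⟨hU, hUT⟩ => by
      obtain ⟨c, hc, hne, hmeas⟩ := hU.exists_inter_ball (fun b => (hUT b).1)
        (show (0 : ℝ) < (1 / 2) ^ n by positivity)
      exact ⟨_, ⟨hmeas, fun b => ⟨hne b, inter_subset_left.trans (hUT b).2⟩⟩, c, hc, fun b => rfl⟩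
  choose hgood c hc hUc using hU
  have hdist {n : ℕ} {b : β} {t : S} (ht : t ∈ U (n + 1) b) : dist t (c n b) < (1 / 2) ^ n := by
    rw [hUc] at ht
    exact ht.2
  have hcauchy (b : β) (n : ℕ) : dist (c n b) (c (n + 1) b) ≤ 2 * (1 / 2) ^ n := by
    obtain ⟨t, ht⟩ := ((hgood (n + 2)).2 b).1
    have ht' : t ∈ U (n + 1) b := by
      rw [hUc] at ht
      exact ht.1
    have hlt := hdist ht
    rw [pow_succ] at hlt
    linarith [dist_triangle_left (c n b) (c (n + 1) b) t, hdist ht',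
      show (0 : ℝ) < (1 / 2) ^ n by positivity]
  choose f hf using fun b => cauchySeq_tendsto_of_complete
    (cauchySeq_of_le_geometric (1 / 2) 2 one_half_lt_one (hcauchy b))
  refine ⟨f, measurable_of_tendsto_metrizable hc (tendsto_pi_nhds.2 hf), fun b => ?_⟩
  choose t ht using fun n => ((hgood (n + 1)).2 b).1
  have htf : Tendsto t atTop (𝓝 (f b)) := (hf b).congr_dist <|
    squeeze_zero (fun _ => dist_nonneg) (fun n => (dist_comm _ _).trans_le (hdist (ht n)).le)
      (tendsto_pow_atTop_nhds_zero_of_lt_one (by norm_num) one_half_lt_one)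
  exact mem_closure_of_tendsto htf <| .of_forall fun n => ((hgood (n + 1)).2 b).2 (ht n)

/-- The Castaing representation. -/
theorem exists_dense_selections (hT : EffrosMeasurable m T)
    (hne : ∀ b, (T b).Nonempty) :
    ∃ f : TopologicalSpace.countableBasis S → β → S, (∀ k, Measurable (f k)) ∧
      ∀ b, _root_.closure (range fun k => f k b) = _root_.closure (T b) := by
  have hsel (B : TopologicalSpace.countableBasis S) : ∃ f : β → S, Measurable f ∧
      ∀ b, f b ∈ _root_.closure (if (T b ∩ B).Nonempty then T b ∩ B else T b) := by
    have hB := TopologicalSpace.isOpen_of_mem_countableBasis B.2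
    refine ((hT.inter_isOpen hB).ite hT (hT _ hB)).exists_measurable_mem_closure fun b => ?_
    split_ifs with hb
    exacts [hb, hne b]
  choose f hf hfT using hsel
  refine ⟨f, hf, fun b => subset_antisymm (closure_minimal ?_ isClosed_closure)
    (closure_minimal (fun t ht => ?_) isClosed_closure)⟩
  · rintro _ ⟨B, rfl⟩
    refine closure_mono ?_ (hfT B b)
    split_ifs
    exacts [inter_subset_left, subset_rfl]
  · refine mem_closure_iff_nhds.2 fun U hU => ?_
    obtain ⟨B, hB, htB, hBU⟩ :=
      (TopologicalSpace.isBasis_countableBasis S).exists_closure_subset hU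
    have hfB := hfT ⟨B, hB⟩ b
    rw [if_pos ⟨t, ht, htB⟩] at hfB
    exact ⟨_, hBU (closure_mono inter_subset_right hfB), mem_range_self _⟩

end Selection

end EffrosMeasurable

section Caratheodory

variable [MetricSpace S] [ProperSpace S] {g : β → S → ℝ}

lemma measurableSet_exists_mem_isCompact_eq_zero (hgc : ∀ b, Continuous (g b))
    (hgm : ∀ s, Measurable fun b => g b s) {K : Set S} (hK : IsCompact K) :
    MeasurableSet {b | ∃ s ∈ K, g b s = 0} := by
  obtain ⟨D, hDK, hDc, hKD⟩ :=
    (TopologicalSpace.IsSeparable.of_separableSpace K).exists_countable_dense_subset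
  have hzero : {b | ∃ s ∈ K, g b s = 0} = ⋂ n : ℕ, ⋃ s ∈ D, {b | |g b s| < 1 / ((n : ℝ) + 1)} := by
    ext b
    simp only [Set.mem_ofPred_eq, mem_iInter, mem_iUnion, exists_prop]
    constructor
    · rintro ⟨s, hs, h0⟩ n
      obtain ⟨u, hun, huD⟩ := mem_closure_iff.1 (hKD hs) _
        (isOpen_lt (hgc b).abs continuous_const)
        (show |g b s| < 1 / ((n : ℝ) + 1) by rw [h0, abs_zero]; positivity)
      exact ⟨u, huD, hun⟩
    · intro happrox
      obtain ⟨s₀, hs₀, -⟩ := happrox 0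
      obtain ⟨s, hs, hmin⟩ := hK.exists_isMinOn ⟨s₀, hDK hs₀⟩ (hgc b).abs.continuousOn
      refine ⟨s, hs, ?_⟩
      by_contra hne
      obtain ⟨n, hn⟩ := exists_nat_one_div_lt (abs_pos.2 hne)
      obtain ⟨u, hu, hun⟩ := happrox n
      exact (hmin (hDK hu)).not_gt (hun.trans hn)
  rw [hzero]
  exact MeasurableSet.iInter fun n => MeasurableSet.biUnion hDc fun s _ =>
    measurableSet_lt (hgm s).abs measurable_const

lemma measurableSet_exists_mem_isClosed_eq_zero (hgc : ∀ b, Continuous (g b))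
    (hgm : ∀ s, Measurable fun b => g b s) {F : Set S} (hF : IsClosed F) :
    MeasurableSet {b | ∃ s ∈ F, g b s = 0} := by
  have hcover : {b | ∃ s ∈ F, g b s = 0} =
      ⋃ n, {b | ∃ s ∈ F ∩ compactCovering S n, g b s = 0} := by
    ext b
    simp only [Set.mem_ofPred_eq, mem_iUnion]
    refine ⟨fun ⟨s, hs, h0⟩ => ?_, fun ⟨n, s, hs, h0⟩ => ⟨s, hs.1, h0⟩⟩
    obtain ⟨n, hn⟩ := exists_mem_compactCovering s
    exact ⟨n, s, ⟨hs, hn⟩, h0⟩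
  rw [hcover]
  exact MeasurableSet.iUnion fun n => measurableSet_exists_mem_isCompact_eq_zero hgc hgm
    ((isCompact_compactCovering S n).inter_left hF)

lemma effrosMeasurable_zeros (hgc : ∀ b, Continuous (g b))
    (hgm : ∀ s, Measurable fun b => g b s) : EffrosMeasurable m fun b => {s | g b s = 0} := by
  intro V hV
  obtain ⟨F, hF, -, hFV, -⟩ := hV.exists_iUnion_isClosed
  have hcover : {b | ({s | g b s = 0} ∩ V).Nonempty} = ⋃ n, {b | ∃ s ∈ F n, g b s = 0} := by
    ext b
    simp only [← hFV, Set.Nonempty, mem_inter_iff, Set.mem_ofPred_eq, mem_iUnion]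
    exact ⟨fun ⟨s, h0, n, hn⟩ => ⟨n, s, hn, h0⟩, fun ⟨n, s, hn, h0⟩ => ⟨s, h0, n, hn⟩⟩
  rw [hcover]
  exact MeasurableSet.iUnion fun n => measurableSet_exists_mem_isClosed_eq_zero hgc hgm (hF n)

lemma exists_measurable_eq_zero [Nonempty S] [MeasurableSpace S] [BorelSpace S]
    (hgc : ∀ b, Continuous (g b)) (hgm : ∀ s, Measurable fun b => g b s) :
    ∃ q : β → S, Measurable q ∧ ∀ b, (∃ s, g b s = 0) → g b (q b) = 0 := by
  have hzeros := effrosMeasurable_zeros hgc hgm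
  obtain ⟨q, hq, hqz⟩ :=
    (hzeros.ite (.const univ) hzeros.measurableSet_nonempty).exists_measurable_mem_closure
      fun b => by
        split_ifs with hb
        exacts [hb, univ_nonempty]
  refine ⟨q, hq, fun b hb => ?_⟩
  have hqb := hqz b
  rwa [if_pos (show {s | g b s = 0}.Nonempty from hb),
    (isClosed_eq (hgc b) continuous_const).closure_eq] at hqb

end Caratheodory

end EffrosMeasurable

section Support

variable {β S : Type*} {m : MeasurableSpace β} [TopologicalSpace S] [HereditarilyLindelofSpace S]
  [MeasurableSpace S]

lemma disjoint_support_iff_measure_eq_zero {μ : Measure S} {V : Set S} (hV : IsOpen V) :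
    Disjoint μ.support V ↔ μ V = 0 := by
  refine ⟨fun h => measure_mono_null h.subset_compl_left Measure.measure_compl_support,
    fun h => ?_⟩
  exact (subset_compl_iff_disjoint_left.1 (Measure.subset_compl_support_of_isOpen hV h))

lemma support_eq_of_forall_isOpen {μ : Measure S} {C : Set S} (hC : IsClosed C)
    (h : ∀ V, IsOpen V → (Disjoint C V ↔ μ V = 0)) : μ.support = C := by
  have hdisj {V : Set S} (hV : IsOpen V) : Disjoint μ.support V ↔ Disjoint C V :=
    (disjoint_support_iff_measure_eq_zero hV).trans (h V hV).symm
  refine subset_antisymm (disjoint_compl_right_iff_subset.1 ?_)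
    (disjoint_compl_right_iff_subset.1 ?_)
  · exact (hdisj hC.isOpen_compl).2 disjoint_compl_right
  · exact (hdisj Measure.isClosed_support.isOpen_compl).1 disjoint_compl_right

lemma effrosMeasurable_support [OpensMeasurableSpace S] (ν : Kernel β S) :
    EffrosMeasurable m fun b => (ν b).support := fun V hV => by
  simp only [← not_disjoint_iff_nonempty_inter, disjoint_support_iff_measure_eq_zero hV]
  exact (ν.measurable_coe hV.measurableSet (measurableSet_singleton 0)).compl

lemma exists_kernel_support_eq_closure_range [BorelSpace S] {ι : Type*} [Countable ι] [Nonempty ι]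
    {f : ι → β → S} (hf : ∀ k, Measurable (f k)) :
    ∃ ν : Kernel β S, IsMarkovKernel ν ∧ ∀ b, (ν b).support = closure (range fun k => f k b) := by
  let _ : MeasurableSpace ι := ⊤
  let μ : Measure ι := Measure.count.toFinite
  have hf' : Measurable fun x : β × ι => f x.2 x.1 := measurable_from_prod_countable_left hf
  refine ⟨(Kernel.id ×ₖ Kernel.const β μ).map fun x => f x.2 x.1, Kernel.IsMarkovKernel.map _ hf',
    fun b => support_eq_of_forall_isOpen isClosed_closure fun V hV => ?_⟩
  have hnull : (∀ᵐ k ∂μ, f k b ∉ V) ↔ ∀ k, f k b ∉ V := by rw [ae_toFinite, Measure.ae_count_iff]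
  have hclosure : Disjoint (closure (range fun k => f k b)) V ↔ Disjoint (range fun k => f k b) V :=
    ⟨fun h => h.mono_left subset_closure, fun h => h.closure_left hV⟩
  rw [hclosure, Kernel.map_apply' _ hf' _ hV.measurableSet, Kernel.prod_apply,
    Kernel.id_apply, Kernel.const_apply, Measure.dirac_prod,
    Measure.map_apply measurable_prodMk_left (hf' hV.measurableSet), disjoint_left,
    forall_mem_range, ← hnull, ae_iff]
  simp only [not_not]
  rfl

end Support

lemma EffrosMeasurable.exists_kernel_support_eq {β S : Type*} {m : MeasurableSpace β}
    [MetricSpace S] [SecondCountableTopology S] [CompleteSpace S] [MeasurableSpace S]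
    [BorelSpace S] [Nonempty S] {T : β → Set S} (hT : EffrosMeasurable m T)
    (hne : ∀ b, (T b).Nonempty) :
    ∃ ν : Kernel β S, IsMarkovKernel ν ∧ ∀ b, (ν b).support = _root_.closure (T b) := by
  obtain ⟨f, hf, hfT⟩ := hT.exists_dense_selections hne
  have : Countable (TopologicalSpace.countableBasis S) :=
    (TopologicalSpace.countable_countableBasis S).to_subtype
  have : Nonempty (TopologicalSpace.countableBasis S) := by
    obtain ⟨B, hB, -⟩ := (TopologicalSpace.isBasis_countableBasis S).exists_subset_of_mem_open
      (mem_univ (Classical.arbitrary S)) isOpen_univ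
    exact ⟨B, hB⟩
  obtain ⟨ν, hν, hsupp⟩ := exists_kernel_support_eq_closure_range hf
  exact ⟨ν, hν, fun b => (hsupp b).trans (hfT b)⟩

section NoArbitrageKernel

variable {β E : Type*} {m : MeasurableSpace β} [NormedAddCommGroup E] [InnerProductSpace ℝ E]
  [FiniteDimensional ℝ E] [MeasurableSpace E] [BorelSpace E]

lemma measurable_tiltMass (ν : Kernel β E) [IsSFiniteKernel ν] {p z : β → E}
    (hp : Measurable p) (hz : Measurable z) : Measurable fun b => tiltMass (ν b) (p b) (z b) := by
  have hu : Measurable fun x : β × E => (p x.1, x.2 - z x.1) := by fun_prop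
  exact ((continuous_tilt.measurable.comp hu).stronglyMeasurable.integral_kernel_prod_right'
    (κ := ν)).measurable

lemma measurable_tiltMoment (ν : Kernel β E) [IsSFiniteKernel ν] {p z : β → E}
    (hp : Measurable p) (hz : Measurable z) : Measurable fun b => tiltMoment (ν b) (p b) (z b) := by
  have hu : Measurable fun x : β × E => (p x.1, x.2 - z x.1) := by fun_prop
  have htilt : Continuous fun s : E × E => tilt s.1 s.2 • s.2 := by fun_prop
  exact ((htilt.measurable.comp hu).stronglyMeasurable.integral_kernel_prod_right'
    (κ := ν)).measurable

lemma measurable_expectedGain (ν : Kernel β E) [IsSFiniteKernel ν] {z : β → E}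
    (hz : Measurable z) (p : E) : Measurable fun b => expectedGain (ν b) (z b) p := by
  have hu : Measurable fun x : β × E => x.2 - z x.1 := by fun_prop
  have hgain : Continuous fun u : E => max ⟪p, tilt 0 u • u⟫ 0 := by fun_prop
  exact ((hgain.measurable.comp hu).stronglyMeasurable.integral_kernel_prod_right'
    (κ := ν)).measurable

lemma EffrosMeasurable.exists_measurable_noArbitrage {T : β → Set E} (hT : EffrosMeasurable m T)
    (hne : ∀ b, (T b).Nonempty) :
    ∃ x : β → E, Measurable x ∧ ∀ b, NoArbitrage (𝓟 (T b)) (x b) := by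
  obtain ⟨ν, _, hν⟩ := hT.exists_kernel_support_eq hne
  refine ⟨fun b => 0 + (tiltMass (ν b) 0 0)⁻¹ • tiltMoment (ν b) 0 0,
    measurable_const.add ((measurable_tiltMass ν measurable_const measurable_const).inv.smul
      (measurable_tiltMoment ν measurable_const measurable_const)), fun b => ?_⟩
  rw [← noArbitrage_principal_closure, ← hν, ← noArbitrage_ae_iff_support]
  exact noArbitrage_ae_tilted_mean 0 0

lemma exists_measurable_tiltMoment_eq_zero (ν : Kernel β E) [IsFiniteKernel ν] {z : β → E}
    (hz : Measurable z) : ∃ p : β → E, Measurable p ∧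
      ∀ b, NoArbitrage (ae (ν b)) (z b) → tiltMoment (ν b) (p b) (z b) = 0 := by
  have hcont (b : β) : Continuous fun p => ‖tiltMoment (ν b) p (z b)‖ := by
    have := continuous_tiltMoment (ν b)
    fun_prop
  obtain ⟨p, hp, hp0⟩ := exists_measurable_eq_zero hcont
    fun p => (measurable_tiltMoment ν measurable_const hz).norm
  refine ⟨p, hp, fun b hb => norm_eq_zero.1 (hp0 b ?_)⟩
  simpa only [norm_eq_zero] using exists_tiltMoment_eq_zero hb

lemma effrosMeasurable_noArbitrage_inter (ν₁ ν₂ : Kernel β E) [IsFiniteKernel ν₁]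
    [IsFiniteKernel ν₂] : EffrosMeasurable m
      fun b => {z | NoArbitrage (ae (ν₁ b)) z ∧ NoArbitrage (ae (ν₂ b)) z} := by
  let g (b : β) (s : E × E × E) : ℝ :=
    ‖tiltMoment (ν₁ b) s.1 s.2.2‖ + ‖tiltMoment (ν₂ b) s.2.1 s.2.2‖
  have hgc (b : β) : Continuous (g b) := by
    have h₁ := continuous_tiltMoment (ν₁ b)
    have h₂ := continuous_tiltMoment (ν₂ b)
    fun_prop
  have hgm (s : E × E × E) : Measurable fun b => g b s :=
    (measurable_tiltMoment ν₁ measurable_const measurable_const).norm.add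
      (measurable_tiltMoment ν₂ measurable_const measurable_const).norm
  have hproj (b : β) : {z | NoArbitrage (ae (ν₁ b)) z ∧ NoArbitrage (ae (ν₂ b)) z} =
      (fun s => s.2.2) '' {s | g b s = 0} := by
    ext z
    simp [g, noArbitrage_ae_iff_exists_tiltMoment_eq_zero,
      add_eq_zero_iff_of_nonneg (norm_nonneg _) (norm_nonneg _)]
  simp only [hproj]
  exact (effrosMeasurable_zeros hgc hgm).image (by fun_prop)

lemma EffrosMeasurable.inter_intrinsicInterior_convexHull {G K : β → Set E}
    (hG : EffrosMeasurable m G) (hGne : ∀ b, (G b).Nonempty) (hGconv : ∀ b, Convex ℝ (G b))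
    (hGri : ∀ b, G b = intrinsicInterior ℝ (G b)) (hK : EffrosMeasurable m K)
    (hKne : ∀ b, (K b).Nonempty) :
    EffrosMeasurable m fun b => G b ∩ intrinsicInterior ℝ (convexHull ℝ (K b)) := by
  obtain ⟨ν₁, _, hν₁⟩ := hG.exists_kernel_support_eq hGne
  obtain ⟨ν₂, _, hν₂⟩ := hK.exists_kernel_support_eq hKne
  convert effrosMeasurable_noArbitrage_inter ν₁ ν₂ using 2 with b
  ext z
  rw [Set.mem_ofPred_eq, noArbitrage_ae_iff_support, noArbitrage_ae_iff_support, hν₁, hν₂,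
    noArbitrage_principal_closure_iff_mem (hGconv b) (hGri b) (hGne b),
    noArbitrage_principal_closure, ← noArbitrage_principal_convexHull,
    noArbitrage_principal_iff_mem_intrinsicInterior (convex_convexHull ℝ _) (hKne b).convexHull,
    mem_inter_iff]

lemma exists_measurable_arbitrage (ν : Kernel β E) [IsFiniteKernel ν] {z : β → E}
    (hz : Measurable z) : ∃ p : β → E, Measurable p ∧ ∀ b, (∀ᵐ y ∂ν b, ⟪p b, y - z b⟫ ≤ 0) ∧
      ((∀ᵐ y ∂ν b, ⟪p b, y - z b⟫ = 0) → NoArbitrage (ae (ν b)) (z b)) := by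
  let g (b : β) (p : E) : ℝ :=
    |expectedGain (ν b) (z b) p| + |expectedGain (ν b) (z b) (-p) - 1|
  have hgc (b : β) : Continuous (g b) := by
    have := continuous_expectedGain (ν := ν b) (z := z b)
    fun_prop
  have hgm (p : E) : Measurable fun b => g b p :=
    (measurable_expectedGain ν hz p).abs.add ((measurable_expectedGain ν hz (-p)).sub_const 1).abs
  have hg0 {b : β} {p : E} : g b p = 0 ↔
      expectedGain (ν b) (z b) p = 0 ∧ expectedGain (ν b) (z b) (-p) = 1 := by
    rw [add_eq_zero_iff_of_nonneg (abs_nonneg _) (abs_nonneg _), abs_eq_zero, abs_eq_zero,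
      sub_eq_zero]
  obtain ⟨p, hp, hp0⟩ := exists_measurable_eq_zero hgc hgm
  refine ⟨fun b => if ∃ q, g b q = 0 then p b else 0,
    hp.ite (effrosMeasurable_zeros hgc hgm).measurableSet_nonempty measurable_const, fun b => ?_⟩
  dsimp only
  split_ifs with hb
  · obtain ⟨hgain, hloss⟩ := hg0.1 (hp0 b hb)
    refine ⟨expectedGain_eq_zero_iff.1 hgain, fun hnull => ?_⟩
    have hzero : expectedGain (ν b) (z b) (-p b) = 0 :=
      expectedGain_eq_zero_iff.2 (hnull.mono fun y hy => by rw [inner_neg_left, hy, neg_zero])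
    exact absurd (hloss.symm.trans hzero) one_ne_zero
  · refine ⟨.of_forall fun y => (inner_zero_left _).le, fun _ => ?_⟩
    by_contra hna
    obtain ⟨q, hq⟩ := exists_expectedGain_eq_of_not_noArbitrage hna
    exact hb ⟨q, hg0.2 hq⟩

lemma exists_measurable_arbitrage_norm_le_one (ν : Kernel β E) [IsFiniteKernel ν] {z : β → E}
    (hz : Measurable z) : ∃ p : β → E, Measurable p ∧ (∀ b, ‖p b‖ ≤ 1) ∧
      ∀ b, (∀ᵐ y ∂ν b, ⟪p b, y - z b⟫ ≤ 0) ∧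
        ((∀ᵐ y ∂ν b, ⟪p b, y - z b⟫ = 0) → NoArbitrage (ae (ν b)) (z b)) := by
  obtain ⟨p, hp, harb⟩ := exists_measurable_arbitrage ν hz
  have hr (b : β) : 0 < (1 + ‖p b‖)⁻¹ := by positivity
  refine ⟨fun b => (1 + ‖p b‖)⁻¹ • p b, by fun_prop, fun b => ?_, fun b => ⟨?_, fun h => ?_⟩⟩
  · rw [norm_smul, Real.norm_of_nonneg (hr b).le, inv_mul_le_one₀ (by positivity)]
    exact le_add_of_nonneg_left zero_le_one
  · filter_upwards [(harb b).1] with y hy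
    rw [real_inner_smul_left]
    exact mul_nonpos_of_nonneg_of_nonpos (hr b).le hy
  · refine (harb b).2 (h.mono fun y hy => ?_)
    rw [real_inner_smul_left] at hy
    exact (mul_eq_zero.1 hy).resolve_left (hr b).ne'

end NoArbitrageKernel

section CondMixture

variable {Ω Ω' S : Type*} {mΩ : MeasurableSpace Ω} [mΩ' : MeasurableSpace Ω']
  [MeasurableSpace S] [StandardBorelSpace S] [Nonempty S]

/-- The conditional expectation of the random measure `ν` given `X`, as a function of the value of
`X`: the conditional law given `X` of a point drawn from `ν`. -/
noncomputable def condMixture (X : Ω → Ω') (P : Measure Ω) [IsFiniteMeasure P] (ν : Kernel Ω S)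
    [IsMarkovKernel ν] : Kernel Ω' S :=
  condDistrib Prod.snd (X ∘ Prod.fst) (P ⊗ₘ ν)

variable {X : Ω → Ω'} {P : Measure Ω} [IsFiniteMeasure P] {ν : Kernel Ω S} [IsMarkovKernel ν]

instance : IsMarkovKernel (condMixture X P ν) := by
  rw [condMixture]
  infer_instance

lemma map_compProd_condMixture (hX : Measurable X) :
    (P.map X) ⊗ₘ condMixture X P ν = (P ⊗ₘ ν).map (Prod.map X id) := by
  have hmap : P.map X = (P ⊗ₘ ν).map (X ∘ Prod.fst) := by
    rw [← Measure.map_map hX measurable_fst]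
    exact congrArg (Measure.map X) (Measure.fst_compProd P ν).symm
  rw [hmap]
  exact compProd_map_condDistrib measurable_snd.aemeasurable

lemma setLIntegral_condMixture (hX : Measurable X) {A : Set Ω'} (hA : MeasurableSet A) {V : Set S}
    (hV : MeasurableSet V) :
    ∫⁻ ω in X ⁻¹' A, condMixture X P ν (X ω) V ∂P = ∫⁻ ω in X ⁻¹' A, ν ω V ∂P :=
  calc ∫⁻ ω in X ⁻¹' A, condMixture X P ν (X ω) V ∂P
      = ∫⁻ ω' in A, condMixture X P ν ω' V ∂(P.map X) :=
        (setLIntegral_map hA (Kernel.measurable_coe _ hV) hX).symm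
    _ = ((P.map X) ⊗ₘ condMixture X P ν) (A ×ˢ V) := (Measure.compProd_apply_prod hA hV).symm
    _ = (P ⊗ₘ ν) ((X ⁻¹' A) ×ˢ V) := by
        rw [map_compProd_condMixture hX, Measure.map_apply (hX.prodMap measurable_id) (hA.prod hV)]
        rfl
    _ = ∫⁻ ω in X ⁻¹' A, ν ω V ∂P := Measure.compProd_apply_prod (hX hA) hV

lemma integral_condMixture_ae_eq_condExp {F : Type*} [NormedAddCommGroup F] [NormedSpace ℝ F]
    [CompleteSpace F] (hX : Measurable X) {φ : Ω' × S → F} (hφ : StronglyMeasurable φ)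
    (hint : Integrable (fun a : Ω × S => φ (X a.1, a.2)) (P ⊗ₘ ν)) :
    (fun ω => ∫ y, φ (X ω, y) ∂condMixture X P ν (X ω)) =ᵐ[P]
      P[fun ω => ∫ y, φ (X ω, y) ∂ν ω | mΩ'.comap X] := by
  have hX' : Measurable (Prod.map X id : Ω × S → Ω' × S) := hX.prodMap measurable_id
  have hint' : Integrable φ ((P.map X) ⊗ₘ condMixture X P ν) := by
    rw [map_compProd_condMixture hX]
    exact (integrable_map_measure hφ.aestronglyMeasurable hX'.aemeasurable).2 hint
  have hmeas : StronglyMeasurable fun ω' => ∫ y, φ (ω', y) ∂condMixture X P ν ω' :=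
    hφ.integral_kernel_prod_right'
  refine ae_eq_condExp_of_forall_setIntegral_eq hX.comap_le hint.integral_compProd
    (fun _ _ _ => ?_) ?_ (hmeas.comp_measurable (comap_measurable X)).aestronglyMeasurable
  · exact (hint'.integral_compProd.comp_measurable hX).integrableOn
  rintro _ ⟨A, hA, rfl⟩ -
  calc ∫ ω in X ⁻¹' A, ∫ y, φ (X ω, y) ∂condMixture X P ν (X ω) ∂P
      = ∫ ω' in A, ∫ y in univ, φ (ω', y) ∂condMixture X P ν ω' ∂(P.map X) := by
        simp only [Measure.restrict_univ,
          setIntegral_map hA hmeas.aestronglyMeasurable hX.aemeasurable]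
    _ = ∫ x in A ×ˢ univ, φ x ∂((P.map X) ⊗ₘ condMixture X P ν) :=
        (Measure.setIntegral_compProd hA .univ hint'.integrableOn).symm
    _ = ∫ a in (X ⁻¹' A) ×ˢ univ, φ (X a.1, a.2) ∂(P ⊗ₘ ν) := by
        rw [map_compProd_condMixture hX, setIntegral_map (hA.prod .univ) hφ.aestronglyMeasurable
          hX'.aemeasurable]
        rfl
    _ = ∫ ω in X ⁻¹' A, ∫ y, φ (X ω, y) ∂ν ω ∂P := by
        simp only [Measure.setIntegral_compProd (hX hA) .univ hint.integrableOn,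
          Measure.restrict_univ]

end CondMixture

section IsCondSupport

variable {Ω S : Type*} [TopologicalSpace S] {ℋ mΩ : MeasurableSpace Ω} {P Q : Measure Ω}
  {F C K K' : Ω → Set S}

/-- `K` is the conditional support of the random set `F` given `ℋ`: up to null sets, the smallest
`ℋ`-measurable random closed set containing `F`. -/
structure IsCondSupport (ℋ : MeasurableSpace Ω) {_ : MeasurableSpace Ω} (P : Measure Ω)
    (F K : Ω → Set S) : Prop where
  isClosed : ∀ ω, IsClosed (K ω)
  nonempty : ∀ ω, (K ω).Nonempty
  effrosMeasurable : EffrosMeasurable ℋ K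
  ae_subset : ∀ᵐ ω ∂P, F ω ⊆ K ω
  ae_minimal : ∀ C : Ω → Set S, (∀ ω, IsClosed (C ω)) → EffrosMeasurable ℋ C →
    (∀ᵐ ω ∂P, F ω ⊆ C ω) → ∀ᵐ ω ∂P, K ω ⊆ C ω

lemma IsCondSupport.ae_eq (h : IsCondSupport ℋ P F K) (h' : IsCondSupport ℋ P F K') :
    K =ᵐ[P] K' := by
  filter_upwards [h.ae_minimal K' h'.isClosed h'.effrosMeasurable h'.ae_subset,
    h'.ae_minimal K h.isClosed h.effrosMeasurable h.ae_subset] with ω hsub hsub'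
  exact hsub.antisymm hsub'

lemma IsCondSupport.congr_ae (h : IsCondSupport ℋ P F K) (hQ : ae Q = ae P) :
    IsCondSupport ℋ Q F K where
  __ := h
  ae_subset := by simpa only [hQ] using h.ae_subset
  ae_minimal := by simpa only [hQ] using h.ae_minimal

lemma EffrosMeasurable.measurableSet_disjoint (hK : EffrosMeasurable ℋ K) {V : Set S}
    (hV : IsOpen V) : MeasurableSet[ℋ] {ω | Disjoint (K ω) V} := by
  simpa only [compl_ofPred, not_nonempty_iff_eq_empty, ← disjoint_iff_inter_eq_empty]
    using (hK V hV).compl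

variable [SecondCountableTopology S]

lemma ae_subset_of_forall_isOpen (hC : ∀ ω, IsClosed (C ω))
    (h : ∀ V, IsOpen V → ∀ᵐ ω ∂P, Disjoint (C ω) V → Disjoint (F ω) V) :
    ∀ᵐ ω ∂P, F ω ⊆ C ω := by
  have hbasis : ∀ᵐ ω ∂P, ∀ V ∈ TopologicalSpace.countableBasis S,
      Disjoint (C ω) V → Disjoint (F ω) V :=
    (ae_ball_iff (TopologicalSpace.countable_countableBasis S)).2
      fun V hV => h V (TopologicalSpace.isOpen_of_mem_countableBasis hV)
  filter_upwards [hbasis] with ω hω y hyF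
  by_contra hyC
  obtain ⟨V, hV, hyV, hVC⟩ := (TopologicalSpace.isBasis_countableBasis S).exists_subset_of_mem_open
    (show y ∈ (C ω)ᶜ from hyC) (hC ω).isOpen_compl
  exact disjoint_left.1 (hω V hV (disjoint_compl_right.mono_right hVC)) hyF hyV

lemma isCondSupport_of_forall_isOpen (hKc : ∀ ω, IsClosed (K ω)) (hKne : ∀ ω, (K ω).Nonempty)
    (hKm : EffrosMeasurable ℋ K)
    (h : ∀ V, IsOpen V → ∀ A, MeasurableSet[ℋ] A →
      ((∀ᵐ ω ∂P, ω ∈ A → Disjoint (F ω) V) ↔ ∀ᵐ ω ∂P, ω ∈ A → Disjoint (K ω) V)) :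
    IsCondSupport ℋ P F K where
  isClosed := hKc
  nonempty := hKne
  effrosMeasurable := hKm
  ae_subset := ae_subset_of_forall_isOpen hKc fun V hV =>
    (h V hV _ (hKm.measurableSet_disjoint hV)).2 (.of_forall fun _ => id)
  ae_minimal _ hCc hCm hFC := ae_subset_of_forall_isOpen hCc fun V hV =>
    (h V hV _ (hCm.measurableSet_disjoint hV)).1 (hFC.mono fun _ hsub hdisj => hdisj.mono_left hsub)

lemma isCondSupport_condMixture {S : Type*} [MetricSpace S] [CompleteSpace S]
    [SecondCountableTopology S] [MeasurableSpace S] [BorelSpace S] [Nonempty S]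
    [IsFiniteMeasure P] (ν : Kernel Ω S) [IsMarkovKernel ν] (hℋ : ℋ ≤ mΩ) :
    IsCondSupport ℋ P (fun ω => (ν ω).support)
      fun ω => (condMixture (mΩ' := ℋ) id P ν ω).support := by
  have hid : @Measurable Ω Ω mΩ ℋ id := measurable_id'' hℋ
  refine isCondSupport_of_forall_isOpen (fun _ => Measure.isClosed_support)
    (fun _ => Measure.nonempty_support (IsProbabilityMeasure.ne_zero _))
    (effrosMeasurable_support _) fun V hV A hA => ?_
  have hnull {κ : Ω → Measure S} (hκ : Measurable fun ω => κ ω V) :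
      (∀ᵐ ω ∂P, ω ∈ A → Disjoint (κ ω).support V) ↔ ∫⁻ ω in A, κ ω V ∂P = 0 := by
    simp only [disjoint_support_iff_measure_eq_zero hV, lintegral_eq_zero_iff hκ, EventuallyEq,
      ae_restrict_iff' (hℋ _ hA), Pi.zero_apply]
  rw [hnull (ν.measurable_coe hV.measurableSet),
    hnull ((Kernel.measurable_coe _ hV.measurableSet).mono hℋ le_rfl)]
  exact (setLIntegral_condMixture (mΩ' := ℋ) hid hA hV.measurableSet).congr_left.symm

end IsCondSupport

section CondCentred

variable {Ω E : Type*} [NormedAddCommGroup E] [NormedSpace ℝ E] {ℋ mΩ : MeasurableSpace Ω}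
  {Q : Measure Ω} {g : Ω → E} {D : Ω → ℝ}

/-- `g` is integrable with vanishing conditional expectation given `ℋ`: the property required of a
martingale increment. -/
def CondCentred [CompleteSpace E] (ℋ : MeasurableSpace Ω) {_ : MeasurableSpace Ω} (Q : Measure Ω)
    (g : Ω → E) : Prop :=
  Integrable g Q ∧ Q[g | ℋ] =ᵐ[Q] 0

/-- The measure with density `D` with respect to `Q`. -/
noncomputable def reweight (Q : Measure Ω) (D : Ω → ℝ) : Measure Ω :=
  Q.withDensity fun ω => ENNReal.ofReal (D ω)

lemma ae_reweight (hD : Measurable D) (hpos : ∀ ω, 0 < D ω) : ae (reweight Q D) = ae Q :=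
  le_antisymm (withDensity_absolutelyContinuous _ _).ae_le
    (withDensity_absolutelyContinuous' hD.ennreal_ofReal.aemeasurable
      (.of_forall fun ω => (ENNReal.ofReal_pos.2 (hpos ω)).ne')).ae_le

lemma integrable_reweight_iff (hD : Measurable D) (hpos : ∀ ω, 0 < D ω) :
    Integrable g (reweight Q D) ↔ Integrable (fun ω => D ω • g ω) Q := by
  rw [reweight, integrable_withDensity_iff_integrable_smul' hD.ennreal_ofReal
    (.of_forall fun _ => ENNReal.ofReal_lt_top)]
  simp only [ENNReal.toReal_ofReal (hpos _).le]

lemma setIntegral_reweight (hD : Measurable D) (hpos : ∀ ω, 0 < D ω) {A : Set Ω}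
    (hA : MeasurableSet A) : ∫ ω in A, g ω ∂reweight Q D = ∫ ω in A, D ω • g ω ∂Q := by
  rw [reweight, setIntegral_withDensity_eq_setIntegral_toReal_smul hD.ennreal_ofReal
    (.of_forall fun _ => ENNReal.ofReal_lt_top) g hA]
  simp only [ENNReal.toReal_ofReal (hpos _).le]

variable [IsFiniteMeasure Q]

lemma isFiniteMeasure_reweight (hD : Measurable D) (hpos : ∀ ω, 0 < D ω) (hle : ∀ ω, D ω ≤ 1) :
    IsFiniteMeasure (reweight Q D) :=
  isFiniteMeasure_withDensity_ofReal (Integrable.of_bound hD.aestronglyMeasurable 1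
    (.of_forall fun ω => by simpa [Real.norm_of_nonneg (hpos ω).le] using hle ω)).2

variable [CompleteSpace E]

lemma condCentred_iff_forall_setIntegral_eq_zero (hℋ : ℋ ≤ mΩ) : CondCentred ℋ Q g ↔
    Integrable g Q ∧ ∀ A, MeasurableSet[ℋ] A → ∫ ω in A, g ω ∂Q = 0 := by
  refine and_congr_right fun hg => ⟨fun h0 A hA => ?_, fun h => ?_⟩
  · rw [← setIntegral_condExp hℋ hg hA]
    exact setIntegral_eq_zero_of_ae_eq_zero (h0.mono fun _ hω _ => hω)
  · exact (ae_eq_condExp_of_forall_setIntegral_eq hℋ hg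
      (fun _ _ _ => (integrable_zero _ _ _).integrableOn)
      (fun A hA _ => by simp [h A hA]) stronglyMeasurable_zero.aestronglyMeasurable).symm

lemma condCentred_reweight_iff (hℋ : ℋ ≤ mΩ) (hD : Measurable D) (hpos : ∀ ω, 0 < D ω)
    (hle : ∀ ω, D ω ≤ 1) :
    CondCentred ℋ (reweight Q D) g ↔ CondCentred ℋ Q fun ω => D ω • g ω := by
  have := isFiniteMeasure_reweight (Q := Q) hD hpos hle
  rw [condCentred_iff_forall_setIntegral_eq_zero hℋ, condCentred_iff_forall_setIntegral_eq_zero hℋ,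
    integrable_reweight_iff hD hpos]
  exact and_congr_right fun _ => forall₂_congr fun A hA => by
    rw [setIntegral_reweight hD hpos (hℋ A hA)]

lemma CondCentred.reweight (hg : CondCentred ℋ Q g) (hℋ : ℋ ≤ mΩ) (hD : Measurable[ℋ] D)
    (hpos : ∀ ω, 0 < D ω) (hle : ∀ ω, D ω ≤ 1) : CondCentred ℋ (reweight Q D) g := by
  have hbound (ω : Ω) : ‖D ω‖ ≤ 1 := by simpa [Real.norm_of_nonneg (hpos ω).le] using hle ω
  have hDg : Integrable (D • g) Q :=
    hg.1.bdd_smul 1 (hD.mono hℋ le_rfl).aestronglyMeasurable (.of_forall hbound)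
  refine (condCentred_reweight_iff hℋ (hD.mono hℋ le_rfl) hpos hle).2 ⟨hDg, ?_⟩
  filter_upwards [hg.2, condExp_smul_of_aestronglyMeasurable_left
    hD.stronglyMeasurable.aestronglyMeasurable hDg hg.1] with ω h0 hpull
  exact hpull.trans (by simp [h0])

end CondCentred

lemma tiltMoment_condMixture_ae_eq_condExp {Ω Ω' E : Type*} {mΩ : MeasurableSpace Ω}
    [mΩ' : MeasurableSpace Ω'] [NormedAddCommGroup E] [InnerProductSpace ℝ E]
    [FiniteDimensional ℝ E] [MeasurableSpace E] [BorelSpace E] {P : Measure Ω} [IsFiniteMeasure P]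
    {ν : Kernel Ω E} [IsMarkovKernel ν] {X : Ω → Ω'} (hX : Measurable X) {p z : Ω' → E}
    (hp : Measurable p) (hz : Measurable z) :
    (fun ω => tiltMoment (condMixture X P ν (X ω)) (p (X ω)) (z (X ω))) =ᵐ[P]
      P[fun ω => tiltMoment (ν ω) (p (X ω)) (z (X ω)) | mΩ'.comap X] := by
  have hφ : Measurable fun a : Ω' × E => tilt (p a.1) (a.2 - z a.1) • (a.2 - z a.1) := by
    have hu : Measurable fun a : Ω' × E => (p a.1, a.2 - z a.1) := by fun_prop
    have htilt : Continuous fun s : E × E => tilt s.1 s.2 • s.2 := by fun_prop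
    exact (htilt.measurable.comp hu :)
  exact integral_condMixture_ae_eq_condExp hX hφ.stronglyMeasurable
    (.of_bound (hφ.comp (hX.prodMap measurable_id)).aestronglyMeasurable 1
      (.of_forall fun _ => norm_tilt_smul_le_one _ _))

section OneStep

variable {Ω E : Type*} [NormedAddCommGroup E] [InnerProductSpace ℝ E] [FiniteDimensional ℝ E]
  [MeasurableSpace E] [BorelSpace E] {ℋ 𝒢 mΩ : MeasurableSpace Ω} {P Q : Measure Ω}
  [IsFiniteMeasure Q] {F K : Ω → Set E} {x z Y : Ω → E}

theorem IsCondSupport.exists_condCentred_tiltMoment [IsFiniteMeasure P] {ν : Kernel Ω E}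
    [IsMarkovKernel ν]
    (hK : IsCondSupport ℋ P (fun ω => (ν ω).support) K) (hℋ : ℋ ≤ mΩ) (hz : Measurable[ℋ] z)
    (hNA : ∀ᵐ ω ∂P, NoArbitrage (𝓟 (K ω)) (z ω)) :
    ∃ p, Measurable[ℋ] p ∧ CondCentred ℋ P fun ω => tiltMoment (ν ω) (p ω) (z ω) := by
  obtain ⟨p, hp, hp0⟩ := exists_measurable_tiltMoment_eq_zero (condMixture (mΩ' := ℋ) id P ν) hz
  have hcond := tiltMoment_condMixture_ae_eq_condExp (mΩ' := ℋ) (P := P) (ν := ν)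
    (measurable_id'' hℋ) hp hz
  simp only [MeasurableSpace.comap_id, id] at hcond
  refine ⟨p, hp, .of_bound ((measurable_tiltMoment ν (hp.mono hℋ le_rfl)
    (hz.mono hℋ le_rfl)).aestronglyMeasurable) 1 (.of_forall fun ω => norm_tiltMoment_le _ _ _), ?_⟩
  filter_upwards [hcond, hK.ae_eq (isCondSupport_condMixture ν hℋ), hNA] with ω hω hKω hNAω
  rw [← hω, hp0 ω (noArbitrage_ae_iff_support.2 (by rwa [← hKω])), Pi.zero_apply]

lemma CondCentred.ae_inner_eq_zero {g p : Ω → E} (hg : CondCentred ℋ Q g) (hℋ : ℋ ≤ mΩ)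
    (hp : Measurable[ℋ] p) (hp1 : ∀ ω, ‖p ω‖ ≤ 1) (hle : ∀ᵐ ω ∂Q, ⟪p ω, g ω⟫ ≤ 0) :
    ∀ᵐ ω ∂Q, ⟪p ω, g ω⟫ = 0 := by
  have hint : Integrable (fun ω => ⟪p ω, g ω⟫) Q :=
    hg.1.mono ((hp.mono hℋ le_rfl).aestronglyMeasurable.inner hg.1.1)
      (.of_forall fun ω => (norm_inner_le_norm _ _).trans
        (mul_le_of_le_one_left (norm_nonneg _) (hp1 ω)))
  have hmean : ∫ ω, ⟪p ω, g ω⟫ ∂Q = 0 := by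
    rw [← integral_condExp hℋ]
    refine integral_eq_zero_of_ae ?_
    filter_upwards [hg.2, condExp_bilin_of_stronglyMeasurable_left (innerSL ℝ)
      hp.stronglyMeasurable hint hg.1] with ω h0 hpull
    exact hpull.trans (by simp [h0])
  have hneg : 0 ≤ᵐ[Q] -fun ω => ⟪p ω, g ω⟫ := hle.mono fun ω => neg_nonneg.2
  have hmean_neg : ∫ ω, (-fun ω => ⟪p ω, g ω⟫) ω ∂Q = 0 := by
    simp only [Pi.neg_apply, integral_neg, hmean, neg_zero]
  filter_upwards [(integral_eq_zero_iff_of_nonneg_ae hneg hint.neg).1 hmean_neg] with ω hω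
  exact neg_eq_zero.1 hω

theorem IsCondSupport.noArbitrage_of_condCentred (hK : IsCondSupport ℋ Q F K) (hℋ : ℋ ≤ mΩ)
    (hxF : ∀ᵐ ω ∂Q, x ω ∈ F ω) (hNA : ∀ᵐ ω ∂Q, NoArbitrage (𝓟 (F ω)) (x ω))
    (hz : Measurable[ℋ] z) (hcent : CondCentred ℋ Q fun ω => x ω - z ω) :
    ∀ᵐ ω ∂Q, NoArbitrage (𝓟 (K ω)) (z ω) := by
  obtain ⟨ν, _, hν⟩ := hK.effrosMeasurable.exists_kernel_support_eq hK.nonempty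
  obtain ⟨p, hp, hp1, harb⟩ := exists_measurable_arbitrage_norm_le_one ν hz
  have hνK (ω : Ω) : (ν ω).support = K ω := (hν ω).trans (hK.isClosed ω).closure_eq
  have hle (ω : Ω) : ∀ y ∈ K ω, ⟪p ω, y - z ω⟫ ≤ 0 := by
    have hclosed : IsClosed {y | ⟪p ω, y - z ω⟫ ≤ 0} := isClosed_le (by fun_prop) (by fun_prop)
    exact hνK ω ▸ Measure.support_subset_of_isClosed hclosed (harb ω).1
  have hgain : ∀ᵐ ω ∂Q, ⟪p ω, x ω - z ω⟫ = 0 := by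
    refine hcent.ae_inner_eq_zero hℋ hp hp1 ?_
    filter_upwards [hxF, hK.ae_subset] with ω hxω hFK using hle ω _ (hFK hxω)
  have hKC : ∀ᵐ ω ∂Q, K ω ⊆ {y | ⟪p ω, y - z ω⟫ = 0} := by
    refine hK.ae_minimal _ (fun ω => isClosed_eq (by fun_prop) (by fun_prop))
      (effrosMeasurable_zeros (fun ω => by fun_prop) fun y => ?_) ?_
    · exact hp.inner (measurable_const.sub hz)
    filter_upwards [hgain, hNA, hK.ae_subset] with ω hω hNAω hFK y hy
    have hsplit (y : E) : ⟪p ω, y - x ω⟫ = ⟪p ω, y - z ω⟫ := by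
      rw [← sub_sub_sub_cancel_right y (x ω) (z ω), inner_sub_right, hω, sub_zero]
    have := hNAω (p ω)
    simp only [eventually_principal, hsplit] at this
    exact this (fun y hy => hle ω y (hFK hy)) y hy
  filter_upwards [hKC] with ω hω
  rw [← hνK, ← noArbitrage_ae_iff_support]
  refine (harb ω).2 ?_
  filter_upwards [Measure.support_mem_ae] with y hy using hω (hνK ω ▸ hy)

theorem exists_condCentred_tilt_smul [IsFiniteMeasure P] (hℋ : ℋ ≤ mΩ) (hQ : ae Q = ae P)
    (hY : Measurable Y) (hz : Measurable[ℋ] z) (hcent : CondCentred ℋ Q fun ω => Y ω - z ω) :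
    ∃ p, Measurable[ℋ] p ∧ CondCentred ℋ P fun ω => tilt (p ω) (Y ω - z ω) • (Y ω - z ω) := by
  have hsupp (ω : Ω) : (Kernel.deterministic Y hY ω).support = {Y ω} :=
    support_eq_of_forall_isOpen isClosed_singleton fun V hV => by
      rw [Kernel.deterministic_apply' _ _ hV.measurableSet]; simp
  have hK := isCondSupport_condMixture (P := P) (Kernel.deterministic Y hY) hℋ
  have hNA := (hK.congr_ae hQ).noArbitrage_of_condCentred hℋ (x := Y)
    (.of_forall fun ω => by simp [hsupp]) (.of_forall fun ω p _ => by simp [hsupp]) hz hcent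
  obtain ⟨p, hp, hp0⟩ := hK.exists_condCentred_tiltMoment hℋ hz (hQ ▸ hNA)
  refine ⟨p, hp, ?_⟩
  simpa [tiltMoment] using hp0

theorem IsCondSupport.exists_condCentred_sub [IsFiniteMeasure P]
    (hK : IsCondSupport ℋ P F K) (hℋ𝒢 : ℋ ≤ 𝒢) (h𝒢 : 𝒢 ≤ mΩ) (hFc : ∀ ω, IsClosed (F ω))
    (hFne : ∀ ω, (F ω).Nonempty) (hF : EffrosMeasurable 𝒢 F) (hz : Measurable[ℋ] z)
    (hNA : ∀ᵐ ω ∂P, NoArbitrage (𝓟 (K ω)) (z ω)) :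
    ∃ x, Measurable[𝒢] x ∧ (∀ ω, NoArbitrage (𝓟 (F ω)) (x ω)) ∧ ∃ ρ : Measure Ω,
      IsFiniteMeasure ρ ∧ ae ρ = ae P ∧ CondCentred ℋ ρ fun ω => x ω - z ω := by
  obtain ⟨ν, _, hν⟩ := hF.exists_kernel_support_eq hFne
  have hνF (ω : Ω) : (ν ω).support = F ω := (hν ω).trans (hFc ω).closure_eq
  have hsupp : IsCondSupport ℋ P (fun ω => (ν.comap id (measurable_id'' h𝒢) ω).support) K := by
    simpa [hνF] using hK
  obtain ⟨p, hp, hp0⟩ := hsupp.exists_condCentred_tiltMoment (hℋ𝒢.trans h𝒢) hz hNA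
  have hmass : Measurable[𝒢] fun ω => tiltMass (ν ω) (p ω) (z ω) :=
    measurable_tiltMass ν (hp.mono hℋ𝒢 le_rfl) (hz.mono hℋ𝒢 le_rfl)
  have hmoment : Measurable[𝒢] fun ω => tiltMoment (ν ω) (p ω) (z ω) :=
    measurable_tiltMoment ν (hp.mono hℋ𝒢 le_rfl) (hz.mono hℋ𝒢 le_rfl)
  have hpos (ω : Ω) : 0 < tiltMass (ν ω) (p ω) (z ω) := tiltMass_pos _ _ _
  have hle (ω : Ω) : tiltMass (ν ω) (p ω) (z ω) ≤ 1 := tiltMass_le_one _ _ _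
  refine ⟨fun ω => z ω + (tiltMass (ν ω) (p ω) (z ω))⁻¹ • tiltMoment (ν ω) (p ω) (z ω),
    (hz.mono hℋ𝒢 le_rfl).add (hmass.inv.smul hmoment), fun ω => ?_,
    reweight P fun ω => tiltMass (ν ω) (p ω) (z ω),
    isFiniteMeasure_reweight (hmass.mono h𝒢 le_rfl) hpos hle,
    ae_reweight (hmass.mono h𝒢 le_rfl) hpos, ?_⟩
  · rw [← hνF, ← noArbitrage_ae_iff_support]
    exact noArbitrage_ae_tilted_mean _ _
  · rw [condCentred_reweight_iff (hℋ𝒢.trans h𝒢) (hmass.mono h𝒢 le_rfl) hpos hle]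
    simpa [smul_smul, (hpos _).ne'] using hp0

end OneStep

section MartingaleMeasure

variable {Ω E : Type*} [NormedAddCommGroup E]

lemma condCentred_sub_iff [NormedSpace ℝ E] [CompleteSpace E] {ℋ mΩ : MeasurableSpace Ω}
    {Q : Measure Ω} [IsFiniteMeasure Q] {Y z : Ω → E} (hℋ : ℋ ≤ mΩ)
    (hz : StronglyMeasurable[ℋ] z) (hzi : Integrable z Q) :
    CondCentred ℋ Q (fun ω => Y ω - z ω) ↔ Integrable Y Q ∧ z =ᵐ[Q] Q[Y | ℋ] := by
  have hint : Integrable (fun ω => Y ω - z ω) Q ↔ Integrable Y Q := by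
    simpa only [sub_eq_add_neg] using integrable_add_iff_integrable_left' hzi.fun_neg
  rw [CondCentred, hint]
  refine and_congr_right fun hY => ?_
  have hsub : Q[Y - z | ℋ] =ᵐ[Q] Q[Y | ℋ] - z := by
    simpa only [condExp_of_stronglyMeasurable hℋ hz hzi] using condExp_sub hY hzi ℋ
  refine ⟨fun h0 => ?_, fun hz => hsub.trans ?_⟩
  · filter_upwards [hsub.symm.trans h0] with ω hω using (sub_eq_zero.1 hω).symm
  · filter_upwards [hz] with ω hω using sub_eq_zero.2 hω.symm

lemma CondCentred.smul_measure [NormedSpace ℝ E] [CompleteSpace E] {ℋ mΩ : MeasurableSpace Ω}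
    {Q : Measure Ω} [IsFiniteMeasure Q] {g : Ω → E} (hg : CondCentred ℋ Q g) (hℋ : ℋ ≤ mΩ)
    {c : ENNReal} (hc : c ≠ ⊤) : CondCentred ℋ (c • Q) g := by
  have := Q.smul_finite hc
  rw [condCentred_iff_forall_setIntegral_eq_zero hℋ] at hg ⊢
  refine ⟨hg.1.smul_measure hc, fun A hA => ?_⟩
  rw [Measure.restrict_smul, integral_smul_measure, hg.2 A hA, smul_zero]

variable [InnerProductSpace ℝ E] [FiniteDimensional ℝ E] [MeasurableSpace E] [BorelSpace E]
  {mΩ : MeasurableSpace Ω} {P : Measure Ω} {N : ℕ} {ℱ : ℕ → MeasurableSpace Ω} {x : ℕ → Ω → E}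

/-- One equivalent measure centring all increments is obtained from measures centring one increment
each by reweighting backwards in time: a density that only involves the past of an increment keeps
it centred. -/
lemma exists_forall_condCentred_sub [IsFiniteMeasure P] (hmono : Monotone ℱ) (hle : ∀ n, ℱ n ≤ mΩ)
    (hx : ∀ n ≤ N, Measurable[ℱ n] (x n))
    (h : ∀ n < N, ∃ ρ : Measure Ω, IsFiniteMeasure ρ ∧ ae ρ = ae P ∧
      CondCentred (ℱ n) ρ fun ω => x (n + 1) ω - x n ω) :
    ∃ Q : Measure Ω, IsFiniteMeasure Q ∧ ae Q = ae P ∧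
      ∀ k < N, CondCentred (ℱ k) Q fun ω => x (k + 1) ω - x k ω := by
  suffices hback : ∀ n ≤ N, ∃ Q : Measure Ω, IsFiniteMeasure Q ∧ ae Q = ae P ∧
      ∀ k, n ≤ k → k < N → CondCentred (ℱ k) Q fun ω => x (k + 1) ω - x k ω by
    simpa using hback 0 (N.zero_le)
  intro n hn
  induction hn using Nat.decreasingInduction with
  | self => exact ⟨P, inferInstance, rfl, fun k hNk hkN => absurd hkN hNk.not_gt⟩
  | of_succ n hn ih =>
    obtain ⟨Q, _, hQ, hcent⟩ := ih
    obtain ⟨ρ, _, hρ, hincr⟩ := h n hn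
    obtain ⟨p, hp, hp0⟩ := exists_condCentred_tilt_smul (P := Q) (hle n) (hρ.trans hQ.symm)
      ((hx (n + 1) hn).mono (hle _) le_rfl) (hx n hn.le) hincr
    have hstep := hmono n.le_succ
    have hu : Measurable[ℱ (n + 1)] fun ω => (p ω, x (n + 1) ω - x n ω) :=
      (hp.mono hstep le_rfl).prodMk ((hx (n + 1) hn).sub ((hx n hn.le).mono hstep le_rfl))
    have hD : Measurable[ℱ (n + 1)] fun ω => tilt (p ω) (x (n + 1) ω - x n ω) :=
      (continuous_tilt.measurable.comp hu :)
    have hpos (ω : Ω) := tilt_pos (p ω) (x (n + 1) ω - x n ω)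
    have hle_one (ω : Ω) := tilt_le_one (p ω) (x (n + 1) ω - x n ω)
    refine ⟨reweight Q fun ω => tilt (p ω) (x (n + 1) ω - x n ω),
      isFiniteMeasure_reweight (hD.mono (hle _) le_rfl) hpos hle_one,
      (ae_reweight (hD.mono (hle _) le_rfl) hpos).trans hQ, fun k hnk hkN => ?_⟩
    rcases hnk.eq_or_lt with rfl | hnk
    · exact (condCentred_reweight_iff (hle n) (hD.mono (hle _) le_rfl) hpos hle_one).2 hp0
    · exact (hcent k hnk hkN).reweight (hle k) (hD.mono (hmono hnk) le_rfl) hpos hle_one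

theorem exists_martingale_measure [IsProbabilityMeasure P] (hmono : Monotone ℱ)
    (hle : ∀ n, ℱ n ≤ mΩ) (hx : ∀ n ≤ N, Measurable[ℱ n] (x n))
    (h : ∀ n < N, ∃ ρ : Measure Ω, IsFiniteMeasure ρ ∧ ae ρ = ae P ∧
      CondCentred (ℱ n) ρ fun ω => x (n + 1) ω - x n ω) :
    ∃ Q : Measure Ω, IsProbabilityMeasure Q ∧ ae Q = ae P ∧ (∀ n ≤ N, Integrable (x n) Q) ∧
      ∀ n < N, x n =ᵐ[Q] Q[x (n + 1) | ℱ n] := by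
  obtain ⟨Q, _, hQ, hcent⟩ := exists_forall_condCentred_sub hmono hle hx h
  let D (ω : Ω) : ℝ := (1 + ‖x 0 ω‖)⁻¹
  have hD : Measurable[ℱ 0] D :=
    (((continuous_const.add continuous_norm).measurable.inv).comp (hx 0 N.zero_le) :)
  have hD' : Measurable D := hD.mono (hle 0) le_rfl
  have hpos (ω : Ω) : 0 < D ω := by positivity
  have hle_one (ω : Ω) : D ω ≤ 1 := inv_le_one_of_one_le₀ (le_add_of_nonneg_right (norm_nonneg _))
  have := isFiniteMeasure_reweight (Q := Q) hD' hpos hle_one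
  have hae : ae (reweight Q D) = ae P := (ae_reweight hD' hpos).trans hQ
  have : NeZero (reweight Q D) := ⟨fun h0 => by
    rw [h0, ae_zero] at hae
    exact (inferInstance : NeBot (ae P)).ne hae.symm⟩
  have hx0 : Integrable (x 0) (reweight Q D) := by
    refine (integrable_reweight_iff hD' hpos).2 (.of_bound (hD'.smul ((hx 0 N.zero_le).mono
      (hle 0) le_rfl)).aestronglyMeasurable 1 (.of_forall fun ω => ?_))
    rw [norm_smul, Real.norm_of_nonneg (hpos ω).le, inv_mul_le_one₀ (by positivity)]
    exact le_add_of_nonneg_left zero_le_one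
  set Q' := (reweight Q D univ)⁻¹ • reweight Q D with hQ'
  have hc : (reweight Q D univ)⁻¹ ≠ ⊤ := by simp [NeZero.ne]
  have : IsProbabilityMeasure Q' := isProbabilityMeasureSMul
  have hcent' (k : ℕ) (hk : k < N) : CondCentred (ℱ k) Q' fun ω => x (k + 1) ω - x k ω :=
    ((hcent k hk).reweight (hle k) (hD.mono (hmono k.zero_le) le_rfl) hpos hle_one).smul_measure
      (hle k) hc
  have hmart (n : ℕ) (hn : n < N) (hxi : Integrable (x n) Q') :=
    (condCentred_sub_iff (hle n) (hx n hn.le).stronglyMeasurable hxi).1 (hcent' n hn)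
  have hint : ∀ n ≤ N, Integrable (x n) Q' := by
    intro n
    induction n with
    | zero => exact fun _ => hx0.smul_measure hc
    | succ n ih => exact fun hn => (hmart n hn (ih (n.le_succ.trans hn))).1
  refine ⟨Q', this, ?_, hint, fun n hn => (hmart n hn (hint n hn.le)).2⟩
  rw [hQ', Measure.ae_ennreal_smul_measure_eq (by simp), hae]

end MartingaleMeasure

section RegularCondDistrib

variable {Ω S : Type*} [MeasurableSpace S] {ℋ mΩ : MeasurableSpace Ω} {P : Measure Ω}
  {X : Ω → S} {κ : Ω → Measure S}

/-- `κ` is a regular conditional distribution of `X` given `ℋ`. It is required to be a probability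
measure everywhere. -/
structure IsRegularCondDistrib (ℋ : MeasurableSpace Ω) {_ : MeasurableSpace Ω} (P : Measure Ω)
    (X : Ω → S) (κ : Ω → Measure S) : Prop where
  isProbabilityMeasure : ∀ ω, IsProbabilityMeasure (κ ω)
  measurable : ∀ C, MeasurableSet C → Measurable[ℋ] fun ω => κ ω C
  toReal_ae_eq_condExp : ∀ C, MeasurableSet C →
    (fun ω => (κ ω C).toReal) =ᵐ[P] P[fun ω => if X ω ∈ C then (1 : ℝ) else 0 | ℋ]

lemma IsRegularCondDistrib.ae_notMem_iff [IsFiniteMeasure P] (h : IsRegularCondDistrib ℋ P X κ)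
    (hℋ : ℋ ≤ mΩ) (hX : Measurable X) {C : Set S} (hC : MeasurableSet C) {A : Set Ω}
    (hA : MeasurableSet[ℋ] A) :
    (∀ᵐ ω ∂P, ω ∈ A → X ω ∉ C) ↔ ∀ᵐ ω ∂P, ω ∈ A → κ ω C = 0 := by
  have := h.isProbabilityMeasure
  let g (ω : Ω) : ℝ := if X ω ∈ C then 1 else 0
  have hg : Integrable g P :=
    .of_bound (Measurable.ite (hX hC) measurable_const measurable_const).aestronglyMeasurable 1
      (.of_forall fun ω => by simp only [g]; split_ifs <;> simp)
  have hκ : Integrable (fun ω => (κ ω C).toReal) P :=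
    .of_bound ((h.measurable C hC).mono hℋ le_rfl).ennreal_toReal.aestronglyMeasurable 1
      (.of_forall fun ω => (Real.norm_of_nonneg ENNReal.toReal_nonneg).trans_le measureReal_le_one)
  have hnull {f : Ω → ℝ} (hf : Integrable f P) (hpos : ∀ ω, 0 ≤ f ω) :
      ∫ ω in A, f ω ∂P = 0 ↔ ∀ᵐ ω ∂P, ω ∈ A → f ω = 0 := by
    rw [setIntegral_eq_zero_iff_of_nonneg_ae (.of_forall hpos) hf.integrableOn, EventuallyEq,
      ae_restrict_iff' (hℋ _ hA)]
    rfl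
  have hint : ∫ ω in A, g ω ∂P = ∫ ω in A, (κ ω C).toReal ∂P := by
    rw [← setIntegral_condExp hℋ hg hA]
    exact setIntegral_congr_ae (hℋ _ hA) ((h.toReal_ae_eq_condExp C hC).mono fun ω hω _ => hω.symm)
  calc (∀ᵐ ω ∂P, ω ∈ A → X ω ∉ C) ↔ ∀ᵐ ω ∂P, ω ∈ A → g ω = 0 := by simp [g]
    _ ↔ ∀ᵐ ω ∂P, ω ∈ A → (κ ω C).toReal = 0 := by
      rw [← hnull hg fun ω => by simp only [g]; split_ifs <;> simp, hint,
        hnull hκ fun _ => ENNReal.toReal_nonneg]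
    _ ↔ ∀ᵐ ω ∂P, ω ∈ A → κ ω C = 0 := by simp [ENNReal.toReal_eq_zero_iff]

end RegularCondDistrib

section RandomClosedSet

variable {d : ℕ} {Ω : Type*}

lemma measurableSet_inter_nonempty {V : Set (EuclideanSpace ℝ (Fin d))} (hV : IsOpen V) :
    MeasurableSet {D : CL d | (D.1 ∩ V).Nonempty} :=
  MeasurableSpace.measurableSet_generateFrom ⟨V, hV, rfl⟩

lemma measurable_iff_effrosMeasurable {m : MeasurableSpace Ω} {X : Ω → CL d} :
    Measurable X ↔ EffrosMeasurable m fun ω => (X ω).1 := by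
  refine ⟨fun hX V hV => hX (measurableSet_inter_nonempty hV), fun hX => ?_⟩
  refine measurable_generateFrom ?_
  rintro _ ⟨V, hV, rfl⟩
  exact hX V hV

lemma bundle_coe {C : Set (EuclideanSpace ℝ (Fin d))} (hC : IsClosed C) :
    (bundle C).1 = if C.Nonempty then C else univ := by
  unfold bundle
  split_ifs <;> simp_all

/-- The points every neighbourhood of which is hit with positive `μ`-probability: the support of the
upper distribution of a random closed set with law `μ`. -/
def upperSupport (μ : Measure (CL d)) : Set (EuclideanSpace ℝ (Fin d)) :=
  {y | ∀ ε > 0, 0 < μ {D : CL d | (D.1 ∩ Metric.ball y ε).Nonempty}}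

variable {μ : Measure (CL d)}

lemma disjoint_upperSupport_iff {V : Set (EuclideanSpace ℝ (Fin d))} (hV : IsOpen V) :
    Disjoint (upperSupport μ) V ↔ μ {D : CL d | (D.1 ∩ V).Nonempty} = 0 := by
  refine ⟨fun hdisj => ?_, fun h0 => disjoint_left.2 fun y hy hyV => ?_⟩
  · have hball : ∀ y ∈ V, ∃ ε > 0, μ {D : CL d | (D.1 ∩ Metric.ball y ε).Nonempty} = 0 := by
      simpa [upperSupport] using fun y hy => disjoint_right.1 hdisj hy
    choose! ε hε hnull using hball
    obtain ⟨T, hTV, hTc, hVT⟩ := TopologicalSpace.countable_cover_nhdsWithin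
      (f := fun y => Metric.ball y (ε y)) fun y hy =>
        mem_nhdsWithin_of_mem_nhds (Metric.ball_mem_nhds y (hε y hy))
    refine measure_mono_null (fun D ⟨y, hyD, hyV⟩ => ?_)
      ((measure_biUnion_null_iff hTc).2 fun y hy => hnull y (hTV hy))
    obtain ⟨t, ht, hyt⟩ := mem_iUnion₂.1 (hVT hyV)
    exact mem_iUnion₂.2 ⟨t, ht, y, hyD, hyt⟩
  · obtain ⟨ε, hε, hball⟩ := Metric.isOpen_iff.1 hV y hyV
    exact (hy ε hε).ne' (measure_mono_null (fun D hD => hD.mono (inter_subset_inter_right _ hball))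
      h0)

lemma isClosed_upperSupport : IsClosed (upperSupport μ) := by
  refine isOpen_compl_iff.1 (Metric.isOpen_iff.2 fun y hy => ?_)
  obtain ⟨ε, hε, h0⟩ : ∃ ε > 0, μ {D : CL d | (D.1 ∩ Metric.ball y ε).Nonempty} = 0 := by
    simpa [upperSupport] using hy
  exact ⟨ε, hε, ((disjoint_upperSupport_iff Metric.isOpen_ball).2 h0).subset_compl_left⟩

lemma nonempty_upperSupport [NeZero μ] : (upperSupport μ).Nonempty := by
  by_contra hempty
  have hdisj : Disjoint (upperSupport μ) univ := by
    rw [not_nonempty_iff_eq_empty.1 hempty]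
    exact empty_disjoint univ
  rw [disjoint_upperSupport_iff isOpen_univ] at hdisj
  refine NeZero.ne μ (Measure.measure_univ_eq_zero.1 (measure_mono_null (fun D _ => ?_) hdisj))
  exact D.2.2.mono (subset_inter subset_rfl (subset_univ _))

variable {ℋ mΩ : MeasurableSpace Ω} {P : Measure Ω} {X : Ω → CL d} {κ : Ω → Measure (CL d)}

namespace IsRegularCondDistrib

lemma effrosMeasurable_upperSupport (h : IsRegularCondDistrib ℋ P X κ) :
    EffrosMeasurable ℋ fun ω => upperSupport (κ ω) := by
  intro V hV
  have hpos : MeasurableSet[ℋ] {ω | 0 < κ ω {D : CL d | (D.1 ∩ V).Nonempty}} :=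
    measurableSet_lt measurable_const (h.measurable _ (measurableSet_inter_nonempty hV))
  simpa only [pos_iff_ne_zero, ne_eq, ← disjoint_upperSupport_iff hV,
    not_disjoint_iff_nonempty_inter] using hpos

theorem isCondSupport [IsFiniteMeasure P] (h : IsRegularCondDistrib ℋ P X κ) (hℋ : ℋ ≤ mΩ)
    (hX : Measurable X) :
    IsCondSupport ℋ P (fun ω => (X ω).1) fun ω => upperSupport (κ ω) := by
  have := h.isProbabilityMeasure
  refine isCondSupport_of_forall_isOpen (fun _ => isClosed_upperSupport)
    (fun _ => nonempty_upperSupport) h.effrosMeasurable_upperSupport fun V hV A hA => ?_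
  simpa only [disjoint_upperSupport_iff hV, Set.mem_ofPred_eq, ← not_disjoint_iff_nonempty_inter,
    not_not] using h.ae_notMem_iff hℋ hX (measurableSet_inter_nonempty hV) hA

end IsRegularCondDistrib

end RandomClosedSet

section Recursion

variable {Ω : Type*} {mΩ : MeasurableSpace Ω} {P : Measure Ω} {d N : ℕ}
  {ℱ : ℕ → MeasurableSpace Ω} {G W : ℕ → Ω → Set (EuclideanSpace ℝ (Fin d))}
  {κ : ℕ → Ω → Measure (CL d)} {n : ℕ}

/-- The backward recursion of the martingale selection problem for `G`: the sets `W n` are built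
from `W N = cl (G N)`, with `κ (n + 1)` the regular conditional upper distribution of `W (n + 1)`
given `ℱ n`. -/
structure IsSelectionRecursion {mΩ : MeasurableSpace Ω} (P : Measure Ω) (N : ℕ)
    (ℱ : ℕ → MeasurableSpace Ω) (G W : ℕ → Ω → Set (EuclideanSpace ℝ (Fin d)))
    (κ : ℕ → Ω → Measure (CL d)) : Prop where
  mono : Monotone ℱ
  le (n : ℕ) : ℱ n ≤ mΩ
  nonempty : ∀ n ≤ N, ∀ ω, (G n ω).Nonempty
  convex : ∀ n ≤ N, ∀ ω, Convex ℝ (G n ω)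
  eq_intrinsicInterior : ∀ n ≤ N, ∀ ω, G n ω = intrinsicInterior ℝ (G n ω)
  effrosMeasurable : ∀ n ≤ N, EffrosMeasurable (ℱ n) (G n)
  terminal (ω : Ω) : W N ω = closure (G N ω)
  isRegularCondDistrib : ∀ n < N,
    IsRegularCondDistrib (ℱ n) P (fun ω => bundle (W (n + 1) ω)) (κ (n + 1))
  step : ∀ n < N, (∀ᵐ ω ∂P, (W (n + 1) ω).Nonempty) → ∀ ω,
    W n ω = closure (G n ω ∩ intrinsicInterior ℝ (convexHull ℝ (upperSupport (κ (n + 1) ω))))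
  step_empty : ∀ n < N, (¬∀ᵐ ω ∂P, (W (n + 1) ω).Nonempty) → ∀ ω, W n ω = ∅

namespace IsSelectionRecursion

lemma nonempty_upperSupport (h : IsSelectionRecursion P N ℱ G W κ) (hn : n < N) (ω : Ω) :
    (upperSupport (κ (n + 1) ω)).Nonempty := by
  have := (h.isRegularCondDistrib n hn).isProbabilityMeasure ω
  exact _root_.nonempty_upperSupport

lemma isClosed (h : IsSelectionRecursion P N ℱ G W κ) (hn : n ≤ N) (ω : Ω) :
    IsClosed (W n ω) := by
  rcases hn.eq_or_lt with rfl | hn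
  · exact h.terminal ω ▸ isClosed_closure
  by_cases hne : ∀ᵐ ω ∂P, (W (n + 1) ω).Nonempty
  · exact h.step n hn hne ω ▸ isClosed_closure
  · exact h.step_empty n hn hne ω ▸ isClosed_empty

lemma effrosMeasurable_W (h : IsSelectionRecursion P N ℱ G W κ) (hn : n ≤ N) :
    EffrosMeasurable (ℱ n) (W n) := by
  rcases hn.eq_or_lt with rfl | hlt
  · rw [funext h.terminal]
    exact (h.effrosMeasurable n le_rfl).closure
  by_cases hne : ∀ᵐ ω ∂P, (W (n + 1) ω).Nonempty
  · rw [funext (h.step n hlt hne)]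
    exact ((h.effrosMeasurable n hn).inter_intrinsicInterior_convexHull (h.nonempty n hn)
      (h.convex n hn) (h.eq_intrinsicInterior n hn)
      (h.isRegularCondDistrib n hlt).effrosMeasurable_upperSupport
      (h.nonempty_upperSupport hlt)).closure
  · rw [funext (h.step_empty n hlt hne)]
    exact .const ∅

lemma effrosMeasurable_bundle (h : IsSelectionRecursion P N ℱ G W κ) (hn : n ≤ N) :
    EffrosMeasurable (ℱ n) fun ω => (bundle (W n ω)).1 := by
  simp only [bundle_coe (h.isClosed hn _)]
  exact (h.effrosMeasurable_W hn).ite (.const univ) (h.effrosMeasurable_W hn).measurableSet_nonempty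

lemma ae_bundle_eq (h : IsSelectionRecursion P N ℱ G W κ) (hn : n ≤ N)
    (hne : ∀ᵐ ω ∂P, (W n ω).Nonempty) : ∀ᵐ ω ∂P, (bundle (W n ω)).1 = W n ω :=
  hne.mono fun ω hω => by rw [bundle_coe (h.isClosed hn ω), if_pos hω]

lemma isCondSupport [IsFiniteMeasure P] (h : IsSelectionRecursion P N ℱ G W κ) (hn : n < N) :
    IsCondSupport (ℱ n) P (fun ω => (bundle (W (n + 1) ω)).1) fun ω => upperSupport (κ (n + 1) ω) :=
  (h.isRegularCondDistrib n hn).isCondSupport (h.le n)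
    ((measurable_iff_effrosMeasurable.2 (h.effrosMeasurable_bundle hn)).mono (h.le _) le_rfl)

lemma noArbitrage_terminal_iff (h : IsSelectionRecursion P N ℱ G W κ) {ω : Ω}
    {z : EuclideanSpace ℝ (Fin d)} : NoArbitrage (𝓟 (W N ω)) z ↔ z ∈ G N ω := by
  rw [h.terminal, noArbitrage_principal_closure_iff_mem (h.convex N le_rfl ω)
    (h.eq_intrinsicInterior N le_rfl ω) (h.nonempty N le_rfl ω)]

lemma noArbitrage_iff (h : IsSelectionRecursion P N ℱ G W κ) (hn : n < N)
    (hne : ∀ᵐ ω ∂P, (W (n + 1) ω).Nonempty) {ω : Ω} (hω : (W n ω).Nonempty)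
    {z : EuclideanSpace ℝ (Fin d)} :
    NoArbitrage (𝓟 (W n ω)) z ↔ z ∈ G n ω ∧ NoArbitrage (𝓟 (upperSupport (κ (n + 1) ω))) z := by
  rw [h.step n hn hne] at hω ⊢
  exact noArbitrage_closure_inter_intrinsicInterior_convexHull (h.convex n hn.le ω)
    (h.eq_intrinsicInterior n hn.le ω) (h.nonempty_upperSupport hn ω) (closure_nonempty_iff.1 hω)

lemma mem_of_noArbitrage (h : IsSelectionRecursion P N ℱ G W κ) (hn : n < N)
    (hne : ∀ᵐ ω ∂P, (W (n + 1) ω).Nonempty) {ω : Ω} {z : EuclideanSpace ℝ (Fin d)}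
    (hzG : z ∈ G n ω) (hz : NoArbitrage (𝓟 (upperSupport (κ (n + 1) ω))) z) : z ∈ W n ω := by
  rw [← noArbitrage_principal_convexHull, noArbitrage_principal_iff_mem_intrinsicInterior
    (convex_convexHull ℝ _) (h.nonempty_upperSupport hn ω).convexHull] at hz
  exact h.step n hn hne ω ▸ subset_closure ⟨hzG, hz⟩

theorem ae_mem_of_condCentred_sub [IsFiniteMeasure P] (h : IsSelectionRecursion P N ℱ G W κ)
    {x : ℕ → Ω → EuclideanSpace ℝ (Fin d)} (hx : ∀ n ≤ N, Measurable[ℱ n] (x n))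
    (hxG : ∀ n ≤ N, ∀ᵐ ω ∂P, x n ω ∈ G n ω) {Q : Measure Ω} [IsFiniteMeasure Q] (hQ : ae Q = ae P)
    (hcent : ∀ n < N, CondCentred (ℱ n) Q fun ω => x (n + 1) ω - x n ω) (hn : n ≤ N) :
    ∀ᵐ ω ∂P, x n ω ∈ W n ω ∧ NoArbitrage (𝓟 (W n ω)) (x n ω) := by
  induction hn using Nat.decreasingInduction with
  | self =>
    filter_upwards [hxG N le_rfl] with ω hω
    exact ⟨h.terminal ω ▸ subset_closure hω, h.noArbitrage_terminal_iff.2 hω⟩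
  | of_succ n hn ih =>
    have hne : ∀ᵐ ω ∂P, (W (n + 1) ω).Nonempty := ih.mono fun ω hω => ⟨_, hω.1⟩
    have hbundle : ∀ᵐ ω ∂Q, (bundle (W (n + 1) ω)).1 = W (n + 1) ω :=
      hQ ▸ h.ae_bundle_eq hn hne
    have hNA : ∀ᵐ ω ∂Q, NoArbitrage (𝓟 (upperSupport (κ (n + 1) ω))) (x n ω) := by
      rw [← hQ] at ih
      refine ((h.isCondSupport hn).congr_ae hQ).noArbitrage_of_condCentred (h.le n) ?_ ?_
        (hx n hn.le) (hcent n hn)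
      · filter_upwards [ih, hbundle] with ω hω heq using by rw [heq]; exact hω.1
      · filter_upwards [ih, hbundle] with ω hω heq using by rw [heq]; exact hω.2
    filter_upwards [hxG n hn.le, hQ ▸ hNA] with ω hω hNAω
    have hmem := h.mem_of_noArbitrage hn hne hω hNAω
    exact ⟨hmem, (h.noArbitrage_iff hn hne ⟨_, hmem⟩).2 ⟨hω, hNAω⟩⟩

lemma exists_condCentred_sub [IsFiniteMeasure P] (h : IsSelectionRecursion P N ℱ G W κ)
    (hne : ∀ n ≤ N, ∀ᵐ ω ∂P, (W n ω).Nonempty) (hn : n < N) {z : Ω → EuclideanSpace ℝ (Fin d)}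
    (hz : Measurable[ℱ n] z) (hNA : ∀ ω, NoArbitrage (𝓟 (bundle (W n ω)).1) (z ω)) :
    ∃ y, (Measurable[ℱ (n + 1)] y ∧ ∀ ω, NoArbitrage (𝓟 (bundle (W (n + 1) ω)).1) (y ω)) ∧
      ∃ ρ : Measure Ω, IsFiniteMeasure ρ ∧ ae ρ = ae P ∧
        CondCentred (ℱ n) ρ fun ω => y ω - z ω := by
  have hNA' : ∀ᵐ ω ∂P, NoArbitrage (𝓟 (upperSupport (κ (n + 1) ω))) (z ω) := by
    filter_upwards [hne n hn.le, h.ae_bundle_eq hn.le (hne n hn.le)] with ω hω heq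
    exact ((h.noArbitrage_iff hn (hne (n + 1) hn) hω).1 (heq ▸ hNA ω)).2
  obtain ⟨y, hy, hyNA, hρ⟩ := (h.isCondSupport hn).exists_condCentred_sub (h.mono n.le_succ)
    (h.le _) (fun ω => (bundle (W (n + 1) ω)).2.1) (fun ω => (bundle (W (n + 1) ω)).2.2)
    (h.effrosMeasurable_bundle hn) hz hNA'
  exact ⟨y, ⟨hy, hyNA⟩, hρ⟩

theorem exists_selection_condCentred_sub [IsFiniteMeasure P] (h : IsSelectionRecursion P N ℱ G W κ)
    (hne : ∀ n ≤ N, ∀ᵐ ω ∂P, (W n ω).Nonempty) :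
    ∃ x : ℕ → Ω → EuclideanSpace ℝ (Fin d), (∀ n ≤ N, Measurable[ℱ n] (x n)) ∧
      (∀ n ≤ N, ∀ᵐ ω ∂P, x n ω ∈ G n ω) ∧ ∀ n < N, ∃ ρ : Measure Ω, IsFiniteMeasure ρ ∧
        ae ρ = ae P ∧ CondCentred (ℱ n) ρ fun ω => x (n + 1) ω - x n ω := by
  obtain ⟨x₀, hx₀⟩ := (h.effrosMeasurable_bundle N.zero_le).exists_measurable_noArbitrage
    fun ω => (bundle (W 0 ω)).2.2
  obtain ⟨x, hx⟩ := exists_chain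
    (Good := fun n z => n ≤ N → Measurable[ℱ n] z ∧ ∀ ω, NoArbitrage (𝓟 (bundle (W n ω)).1) (z ω))
    (Rel := fun n z y => n < N → ∃ ρ : Measure Ω, IsFiniteMeasure ρ ∧ ae ρ = ae P ∧
      CondCentred (ℱ n) ρ fun ω => y ω - z ω)
    ⟨x₀, fun _ => hx₀⟩ fun n z hz => by
      by_cases hn : n < N
      · obtain ⟨y, hy, hρ⟩ := h.exists_condCentred_sub hne hn (hz hn.le).1 (hz hn.le).2
        exact ⟨y, fun _ => hy, fun _ => hρ⟩
      · exact ⟨z, fun hn' => absurd hn' hn, fun hn' => absurd hn' hn⟩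
  refine ⟨x, fun n hn => ((hx n).1 hn).1, fun n hn => ?_, fun n hn => (hx n).2 hn⟩
  filter_upwards [hne n hn, h.ae_bundle_eq hn (hne n hn)] with ω hω heq
  have hNA : NoArbitrage (𝓟 (W n ω)) (x n ω) := heq ▸ ((hx n).1 hn).2 ω
  rcases hn.eq_or_lt with rfl | hn
  · exact h.noArbitrage_terminal_iff.1 hNA
  · exact ((h.noArbitrage_iff hn (hne (n + 1) hn) hω).1 hNA).1

end IsSelectionRecursion

end Recursion

theorem IsSelectionRecursion.exists_martingale_selection_iff {Ω : Type*} {mΩ : MeasurableSpace Ω}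
    {P : Measure Ω} [IsProbabilityMeasure P] {d N : ℕ} {ℱ : ℕ → MeasurableSpace Ω}
    {G W : ℕ → Ω → Set (EuclideanSpace ℝ (Fin d))} {κ : ℕ → Ω → Measure (CL d)}
    (h : IsSelectionRecursion P N ℱ G W κ) :
    (∃ (x : ℕ → Ω → EuclideanSpace ℝ (Fin d)) (Q : @Measure Ω mΩ),
        (∀ n ≤ N, Measurable[ℱ n] (x n)) ∧ (∀ n ≤ N, ∀ᵐ ω ∂P, x n ω ∈ G n ω) ∧
        IsProbabilityMeasure Q ∧ Q ≪ P ∧ P ≪ Q ∧ (∀ n ≤ N, Integrable (x n) Q) ∧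
        ∀ n < N, x n =ᵐ[Q] Q[x (n + 1) | ℱ n]) ↔
      ∀ n < N, ∀ᵐ ω ∂P, (W n ω).Nonempty := by
  constructor
  · rintro ⟨x, Q, hx, hxG, _, hQP, hPQ, hxi, hmart⟩ n hn
    have hcent (k : ℕ) (hk : k < N) : CondCentred (ℱ k) Q fun ω => x (k + 1) ω - x k ω :=
      (condCentred_sub_iff (h.le k) (hx k hk.le).stronglyMeasurable (hxi k hk.le)).2
        ⟨hxi (k + 1) hk, hmart k hk⟩
    exact (h.ae_mem_of_condCentred_sub hx hxG (hQP.ae_le.antisymm hPQ.ae_le) hcent hn.le).mono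
      fun ω hω => ⟨x n ω, hω.1⟩
  · intro hne
    have hne' (n : ℕ) (hn : n ≤ N) : ∀ᵐ ω ∂P, (W n ω).Nonempty := by
      rcases hn.eq_or_lt with rfl | hn
      · exact .of_forall fun ω => h.terminal ω ▸ (h.nonempty n le_rfl ω).closure
      · exact hne n hn
    obtain ⟨x, hx, hxG, hρ⟩ := h.exists_selection_condCentred_sub hne'
    obtain ⟨Q, hQ, hae, hxi, hmart⟩ := exists_martingale_measure h.mono h.le hx hρ
    exact ⟨x, Q, hx, hxG, hQ, Measure.ae_le_iff_absolutelyContinuous.1 hae.le,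
      Measure.ae_le_iff_absolutelyContinuous.1 hae.ge, hxi, hmart⟩

lemma forall_pred_iff_forall_succ {N : ℕ} {p : ℕ → ℕ → Prop} :
    (∀ n, 1 ≤ n → n ≤ N → p (n - 1) n) ↔ ∀ n < N, p n (n + 1) :=
  ⟨fun h n hn => h (n + 1) n.succ_pos hn, fun h n h1 hn => by
    obtain ⟨n, rfl⟩ := Nat.exists_eq_add_of_le' h1
    exact h n hn⟩

theorem martingale_selection_theorem_general
    {Ω : Type*} {mΩ : MeasurableSpace Ω} {P : Measure Ω} [IsProbabilityMeasure P]
    {d N : ℕ}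
    (ℱ : ℕ → MeasurableSpace Ω) (hmono : Monotone ℱ) (hle : ∀ n, ℱ n ≤ mΩ)
    (G : ℕ → Ω → Set (EuclideanSpace ℝ (Fin d)))
    (hGne : ∀ n, n ≤ N → ∀ ω, (G n ω).Nonempty)
    (hGconv : ∀ n, n ≤ N → ∀ ω, Convex ℝ (G n ω))
    (hGrelopen : ∀ n, n ≤ N → ∀ ω, G n ω = intrinsicInterior ℝ (G n ω))
    (hGmeas : ∀ n, n ≤ N → ∀ V : Set (EuclideanSpace ℝ (Fin d)), IsOpen V →
      MeasurableSet[ℱ n] {ω | (G n ω ∩ V).Nonempty})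
    (W : ℕ → Ω → Set (EuclideanSpace ℝ (Fin d)))
    (hWN : ∀ ω, W N ω = closure (G N ω))
    (Pstar : ℕ → Ω → Measure (CL d))
    (hPprob : ∀ n, 1 ≤ n → n ≤ N → ∀ ω, IsProbabilityMeasure (Pstar n ω))
    (hPmeas : ∀ n, 1 ≤ n → n ≤ N → ∀ C : Set (CL d), MeasurableSet C →
      Measurable[ℱ (n - 1)] fun ω => Pstar n ω C)
    (hPcond : ∀ n, 1 ≤ n → n ≤ N → ∀ C : Set (CL d), MeasurableSet C →
      (fun ω => (Pstar n ω C).toReal) =ᵐ[P]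
        P[fun ω => if bundle (W n ω) ∈ C then (1 : ℝ) else 0 | ℱ (n - 1)])
    (hWrec : ∀ n, 1 ≤ n → n ≤ N →
      if ∀ᵐ ω ∂P, (W n ω).Nonempty then
        ∀ ω, W (n - 1) ω = closure (G (n - 1) ω ∩
          intrinsicInterior ℝ (convexHull ℝ
            {y | ∀ ε > 0, 0 <
              Pstar n ω {D : CL d | (D.1 ∩ Metric.ball y ε).Nonempty}}))
      else ∀ ω, W (n - 1) ω = ∅) :
    (∃ (x : ℕ → Ω → EuclideanSpace ℝ (Fin d)) (Q : @Measure Ω mΩ),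
        (∀ n, n ≤ N → Measurable[ℱ n] (x n)) ∧
        (∀ n, n ≤ N → ∀ᵐ ω ∂P, x n ω ∈ G n ω) ∧
        IsProbabilityMeasure Q ∧ Q ≪ P ∧ P ≪ Q ∧
        (∀ n, n ≤ N → Integrable (x n) Q) ∧
        (∀ n, 1 ≤ n → n ≤ N → x (n - 1) =ᵐ[Q] Q[x n | ℱ (n - 1)])) ↔
      (∀ n, n < N → ∀ᵐ ω ∂P, (W n ω).Nonempty) := by
  have h : IsSelectionRecursion P N ℱ G W Pstar :=
    { mono := hmono
      le := hle
      nonempty := hGne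
      convex := hGconv
      eq_intrinsicInterior := hGrelopen
      effrosMeasurable := hGmeas
      terminal := hWN
      isRegularCondDistrib := fun n hn => ⟨hPprob (n + 1) n.succ_pos hn,
        hPmeas (n + 1) n.succ_pos hn, hPcond (n + 1) n.succ_pos hn⟩
      step := fun n hn hne => Eq.mp (if_pos hne) (hWrec (n + 1) n.succ_pos hn)
      step_empty := fun n hn hne => Eq.mp (if_neg hne) (hWrec (n + 1) n.succ_pos hn) }
  have hmart (x : ℕ → Ω → EuclideanSpace ℝ (Fin d)) (Q : @Measure Ω mΩ) :
      (∀ n, 1 ≤ n → n ≤ N → x (n - 1) =ᵐ[Q] Q[x n | ℱ (n - 1)]) ↔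
        ∀ n < N, x n =ᵐ[Q] Q[x (n + 1) | ℱ n] :=
    forall_pred_iff_forall_succ (p := fun k n => x k =ᵐ[Q] Q[x n | ℱ k])
  simpa only [hmart] using h.exists_martingale_selection_iff

/-- **Martingale selection theorem.** Let `(G n)_{n=0}^N` be an adapted sequence of
set-valued maps with nonempty relatively open convex values in `ℝ^d`. Define
`W N = cl (G N)` and, recursively, `W (n-1) = cl (G (n-1) ∩ ri (conv K(W n, ℱ (n-1))))`
when `W n ≠ ∅` a.s. (and `W (n-1) = ∅` otherwise), where `K(W n, ℱ (n-1); ω)` is the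
support of the regular conditional upper distribution `Pstar n` of `W n` given
`ℱ (n-1)`. Then the martingale selection problem for `(G n)` is solvable iff
`W n ≠ ∅` a.s. for all `n < N`. -/
theorem martingale_selection_theorem
    {Ω : Type*} {mΩ : MeasurableSpace Ω} {P : Measure Ω} [IsProbabilityMeasure P]
    [P.IsComplete] {d N : ℕ}
    (ℱ : ℕ → MeasurableSpace Ω) (hmono : Monotone ℱ) (hle : ∀ n, ℱ n ≤ mΩ)
    (G : ℕ → Ω → Set (EuclideanSpace ℝ (Fin d)))
    (hGne : ∀ n, n ≤ N → ∀ ω, (G n ω).Nonempty)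
    (hGconv : ∀ n, n ≤ N → ∀ ω, Convex ℝ (G n ω))
    (hGrelopen : ∀ n, n ≤ N → ∀ ω, G n ω = intrinsicInterior ℝ (G n ω))
    (hGmeas : ∀ n, n ≤ N → ∀ V : Set (EuclideanSpace ℝ (Fin d)), IsOpen V →
      MeasurableSet[ℱ n] {ω | (G n ω ∩ V).Nonempty})
    (W : ℕ → Ω → Set (EuclideanSpace ℝ (Fin d)))
    (hWN : ∀ ω, W N ω = closure (G N ω))
    -- `Pstar n` is a regular conditional distribution of `W n` (bundled as a random
    -- closed set) given `ℱ (n-1)`, for `1 ≤ n ≤ N`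
    (Pstar : ℕ → Ω → Measure (CL d))
    (hPprob : ∀ n, 1 ≤ n → n ≤ N → ∀ ω, IsProbabilityMeasure (Pstar n ω))
    (hPmeas : ∀ n, 1 ≤ n → n ≤ N → ∀ C : Set (CL d), MeasurableSet C →
      Measurable[ℱ (n - 1)] fun ω => Pstar n ω C)
    (hPcond : ∀ n, 1 ≤ n → n ≤ N → ∀ C : Set (CL d), MeasurableSet C →
      (fun ω => (Pstar n ω C).toReal) =ᵐ[P]
        P[fun ω => if bundle (W n ω) ∈ C then (1 : ℝ) else 0 | ℱ (n - 1)])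
    -- the recursion defining `W (n-1)` from `W n`
    (hWrec : ∀ n, 1 ≤ n → n ≤ N →
      if ∀ᵐ ω ∂P, (W n ω).Nonempty then
        ∀ ω, W (n - 1) ω = closure (G (n - 1) ω ∩
          intrinsicInterior ℝ (convexHull ℝ
            {y | ∀ ε > 0, 0 <
              Pstar n ω {D : CL d | (D.1 ∩ Metric.ball y ε).Nonempty}}))
      else ∀ ω, W (n - 1) ω = ∅) :
    (∃ (x : ℕ → Ω → EuclideanSpace ℝ (Fin d)) (Q : @Measure Ω mΩ),
        (∀ n, n ≤ N → Measurable[ℱ n] (x n)) ∧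
        (∀ n, n ≤ N → ∀ᵐ ω ∂P, x n ω ∈ G n ω) ∧
        IsProbabilityMeasure Q ∧ Q ≪ P ∧ P ≪ Q ∧
        (∀ n, n ≤ N → Integrable (x n) Q) ∧
        (∀ n, 1 ≤ n → n ≤ N → x (n - 1) =ᵐ[Q] Q[x n | ℱ (n - 1)])) ↔
      (∀ n, n < N → ∀ᵐ ω ∂P, (W n ω).Nonempty) :=
  martingale_selection_theorem_general ℱ hmono hle G hGne hGconv hGrelopen hGmeas W hWN Pstar
    hPprob hPmeas hPcond hWrec
end
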